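/- arXiv:2007.09030 — 2 statements merged into one kernel-verified Lean document; each statement's English description precedes it below -/
import Mathlib

section
/- Let X, X' be metric spaces with X uniformly perfect, let f : X → X' be an η-quasisymmetric homeomorphism for some homeomorphism η : [0,∞) → [0,∞), and let Y ⊆ X be porous. Then the image f(Y) is a porous subset of X'. -/
open scoped NNReal

/-- A subset `Y` of a metric space `X` is porous: there is `c > 0` such that for every
`y ∈ Y` and every radius `0 < r ≤ diam X` there is `x ∈ X` with
`B(x, c·r) ⊆ B(y, r) \ Y`. -/
def Porous {X : Type*} [MetricSpace X] (Y : Set X) : Prop :=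
  ∃ c : ℝ, 0 < c ∧ ∀ y ∈ Y, ∀ r : ℝ, 0 < r →
    ENNReal.ofReal r ≤ EMetric.diam (Set.univ : Set X) →
    ∃ x : X, Metric.ball x (c * r) ⊆ Metric.ball y r \ Y

/-- `f` is `η`-quasisymmetric, where the control function `η` is a self-homeomorphism of
`[0,∞)`: for all `x, y, z` and `t ≥ 0`, `d(x,y) ≤ t·d(x,z)` implies
`d(f x, f y) ≤ η t · d(f x, f z)`. -/
def IsQuasisymmetricWith {X X' : Type*} [MetricSpace X] [MetricSpace X']
    (η : ℝ≥0 ≃ₜ ℝ≥0) (f : X → X') : Prop :=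
  ∀ x y z : X, ∀ t : ℝ≥0, nndist x y ≤ t * nndist x z →
    nndist (f x) (f y) ≤ η t * nndist (f x) (f z)

/-- A metric space `X` is uniformly perfect: for some `C > 1`, for every `x ∈ X` and every
`0 < r ≤ diam X` the set `B(x, r) \ B(x, r/C)` is nonempty. -/
def UniformlyPerfect (X : Type*) [MetricSpace X] : Prop :=
  ∃ C : ℝ, 1 < C ∧ ∀ x : X, ∀ r : ℝ, 0 < r →
    ENNReal.ofReal r ≤ EMetric.diam (Set.univ : Set X) →
    (Metric.ball x r \ Metric.ball x (r / C)).Nonempty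

/-- If `X` is uniformly perfect, `f : X → X'` is an `η`-quasisymmetric homeomorphism and
`Y ⊆ X` is porous, then `f(Y)` is porous in `X'`. -/
theorem porous_image_of_quasisymmetric {X X' : Type*} [MetricSpace X] [MetricSpace X']
    (hX : UniformlyPerfect X) (f : X ≃ₜ X') (η : ℝ≥0 ≃ₜ ℝ≥0)
    (hf : IsQuasisymmetricWith η f) (Y : Set X) (hY : Porous Y) :
    Porous (f '' Y) := by
  obtain ⟨c, hc, hp⟩ := hY
  set A : ℝ := (η (Real.toNNReal (1 / c)) : ℝ) + (η (Real.toNNReal (3 / c)) : ℝ) with hA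
  have hA0 : 0 ≤ A := by positivity
  have hqs : ∀ t : ℝ, 0 ≤ t → ∀ x y z : X, dist x y ≤ t * dist x z →
      dist (f x) (f y) ≤ (η (Real.toNNReal t) : ℝ) * dist (f x) (f z) := by
    intro t ht x y z h
    have h1 := hf x y z (Real.toNNReal t) (by
      rw [← NNReal.coe_le_coe]
      push_cast
      rw [Real.coe_toNNReal t ht]
      exact h)
    rw [← NNReal.coe_le_coe] at h1
    push_cast at h1
    exact h1
  refine ⟨1 / (3 * (A + 1)), by positivity, ?_⟩
  rintro _ ⟨y, hy, rfl⟩ r hr hdiam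
  -- a point far away from `f y`
  have hex : ∃ w : X, r / 3 ≤ dist (f y) (f w) := by
    by_contra hcon
    push Not at hcon
    have h1 : EMetric.diam (Set.univ : Set X') ≤ ENNReal.ofReal (2 * r / 3) := by
      apply EMetric.diam_le
      intro a _ b _
      rw [edist_dist]
      apply ENNReal.ofReal_le_ofReal
      have ha := hcon (f.symm a)
      have hb := hcon (f.symm b)
      rw [f.apply_symm_apply] at ha hb
      have := dist_triangle_left a b (f y)
      linarith
    have h2 := (ENNReal.ofReal_le_ofReal_iff (by positivity)).1 (hdiam.trans h1)
    linarith
  set S : Set ℝ := {ρ | ∃ w : X, r / 3 ≤ dist (f y) (f w) ∧ dist y w = ρ} with hS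
  have hSne : S.Nonempty := by
    obtain ⟨w, hw⟩ := hex
    exact ⟨_, w, hw, rfl⟩
  have hbdd : BddBelow S := ⟨0, by rintro _ ⟨w, _, rfl⟩; exact dist_nonneg⟩
  set R := sInf S with hR
  have hRpos : 0 < R := by
    obtain ⟨δ, hδ, h⟩ := Metric.continuous_iff.1 f.continuous y (r / 3) (by positivity)
    refine lt_of_lt_of_le hδ (le_csInf hSne ?_)
    rintro _ ⟨w, hw, rfl⟩
    by_contra hlt
    have := h w (by rw [dist_comm]; linarith)
    rw [dist_comm] at this
    linarith
  obtain ⟨_, ⟨w, hw, rfl⟩, hwR⟩ := exists_lt_of_csInf_lt hSne (show sInf S < 2 * R by linarith)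
  have hRw : R ≤ dist y w := csInf_le hbdd ⟨w, hw, rfl⟩
  have hnear : ∀ x, dist y x < R → dist (f y) (f x) < r / 3 := by
    intro x hx
    by_contra hcon
    have : R ≤ dist y x := csInf_le hbdd ⟨x, not_lt.1 hcon, rfl⟩
    linarith
  have hRd : ENNReal.ofReal R ≤ EMetric.diam (Set.univ : Set X) := by
    refine le_trans ?_ (EMetric.edist_le_diam_of_mem (Set.mem_univ y) (Set.mem_univ w))
    rw [edist_dist]
    exact ENNReal.ofReal_le_ofReal hRw
  obtain ⟨x, hx⟩ := hp y hy R hRpos hRd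
  have hxy : dist x y < R := (hx (Metric.mem_ball_self (by positivity))).1
  refine ⟨f x, ?_⟩
  intro z' hz'
  obtain ⟨z, rfl⟩ := f.surjective z'
  have hz : z ∈ Metric.ball x (c * R) := by
    by_contra hcon
    rw [Metric.mem_ball, not_lt, dist_comm] at hcon
    have e1 : R ≤ 1 / c * dist x z := by
      rw [div_mul_eq_mul_div, le_div_iff₀ hc]; linarith
    have e3 : 3 * R ≤ 3 / c * dist x z := by
      rw [div_mul_eq_mul_div, le_div_iff₀ hc]; linarith
    have h1 := hqs (1 / c) (by positivity) x y z (by linarith)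
    have h3 := hqs (3 / c) (by positivity) x w z (by
      have := dist_triangle x y w
      linarith)
    have ht := dist_triangle_left (f y) (f w) (f x)
    have hfin : r / 3 ≤ A * dist (f x) (f z) := by
      rw [hA, add_mul]; linarith
    rw [Metric.mem_ball, dist_comm, div_mul_eq_mul_div, one_mul,
      lt_div_iff₀ (by positivity)] at hz'
    have := dist_nonneg (x := f x) (y := f z)
    nlinarith
  obtain ⟨hz1, hz2⟩ := hx hz
  refine ⟨?_, ?_⟩
  · rw [Metric.mem_ball, dist_comm] at hz1
    have := hnear z hz1
    rw [Metric.mem_ball, dist_comm]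
    linarith
  · rintro ⟨u, hu, huz⟩
    exact hz2 (f.injective huz ▸ hu)
end

section
/- Let X be a nonempty metric space and Y ⊆ X a nonempty porous subset, equipped with the induced metric. Suppose that the conformal dimensions of Y and of X are equal, finite, and positive. Then the conformal dimension of X is not attained: there is no Ahlfors Q-regular metric space W with Q = Confdim X admitting a quasisymmetric homeomorphism from X onto W. -/
open scoped NNReal

universe u

/-- `f` is quasisymmetric if it is `η`-quasisymmetric for some homeomorphism `η` of `[0,∞)`. -/
def IsQuasisymmetric {X X' : Type*} [MetricSpace X] [MetricSpace X'] (f : X → X') : Prop :=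
  ∃ η : ℝ≥0 ≃ₜ ℝ≥0, IsQuasisymmetricWith η f

/-- A metric space `W` is Ahlfors `Q`-regular: it is complete and carries a Borel measure `μ`
with `C⁻¹ r^Q ≤ μ(B(w,r)) ≤ C r^Q` for all `w` and `0 < r ≤ diam W`. -/
def AhlforsRegular (W : Type u) [MetricSpace W] (Q : ℝ) : Prop :=
  CompleteSpace W ∧
    ∃ (_ : MeasurableSpace W) (_ : BorelSpace W) (μ : MeasureTheory.Measure W) (C : ℝ),
      1 ≤ C ∧ ∀ w : W, ∀ r : ℝ, 0 < r →
        ENNReal.ofReal r ≤ EMetric.diam (Set.univ : Set W) →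
        ENNReal.ofReal (C⁻¹ * r ^ Q) ≤ μ (Metric.ball w r) ∧
          μ (Metric.ball w r) ≤ ENNReal.ofReal (C * r ^ Q)

/-- The set of exponents `Q ≥ 0` such that `Z` is quasisymmetric to some Ahlfors
`Q`-regular metric space. -/
def confdimSet (Z : Type u) [MetricSpace Z] : Set ℝ :=
  {Q : ℝ | 0 ≤ Q ∧ ∃ (W : Type u) (_ : MetricSpace W) (f : Z ≃ₜ W),
    AhlforsRegular W Q ∧ IsQuasisymmetric (f : Z → W)}

/-- The (Ahlfors regular) conformal dimension of `Z`. -/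
noncomputable def confdim (Z : Type u) [MetricSpace Z] : ℝ :=
  sInf (confdimSet Z)

/-! ### Weak quasisymmetry -/

/-- A weak (modulus-free) form of quasisymmetry. -/
def WQS {A B : Type*} [MetricSpace A] [MetricSpace B] (f : A → B) : Prop :=
  (∀ ε : ℝ, 0 < ε → ∃ δ : ℝ, 0 < δ ∧ ∀ x y z : A, dist x y ≤ δ * dist x z →
    dist (f x) (f y) ≤ ε * dist (f x) (f z)) ∧
  (∀ T : ℝ, 0 < T → ∃ H : ℝ, 0 < H ∧ ∀ x y z : A, dist x y ≤ T * dist x z →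
    dist (f x) (f y) ≤ H * dist (f x) (f z))

lemma eta_zero (η : ℝ≥0 ≃ₜ ℝ≥0) : η 0 = 0 := by
  rcases η.continuous.strictMono_of_inj η.injective with h | h
  · obtain ⟨t, ht⟩ := η.surjective 0
    have : η 0 ≤ η t := h.monotone (zero_le)
    rw [ht] at this
    exact le_antisymm this (zero_le)
  · obtain ⟨t, ht⟩ := η.surjective (η 0 + 1)
    have : η t ≤ η 0 := h.antitone (zero_le)
    rw [ht] at this
    have h2 : η 0 < η 0 + 1 := lt_add_one _
    exact absurd this (not_le.mpr h2)

lemma IsQuasisymmetricWith.real {A B : Type*} [MetricSpace A] [MetricSpace B] {f : A → B}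
    {η : ℝ≥0 ≃ₜ ℝ≥0} (h : IsQuasisymmetricWith η f) (t : ℝ≥0) (x y z : A)
    (hd : dist x y ≤ t * dist x z) : dist (f x) (f y) ≤ η t * dist (f x) (f z) := by
  have := h x y z t (by exact_mod_cast hd)
  exact_mod_cast this

lemma IsQuasisymmetric.wqs {A B : Type*} [MetricSpace A] [MetricSpace B] {f : A → B}
    (h : IsQuasisymmetric f) : WQS f := by
  obtain ⟨η, hη⟩ := h
  constructor
  · intro ε hε
    lift ε to ℝ≥0 using hε.le
    refine ⟨(η.symm ε : ℝ≥0), ?_, ?_⟩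
    · have : η.symm ε ≠ 0 := by
        intro h0
        have h1 := congrArg η h0
        rw [η.apply_symm_apply, eta_zero] at h1
        simp [h1] at hε
      exact_mod_cast pos_iff_ne_zero.mpr this
    · intro x y z hd
      have := hη.real _ x y z hd
      rwa [η.apply_symm_apply] at this
  · intro T hT
    refine ⟨(η ⟨T, hT.le⟩ : ℝ≥0) + 1, by positivity, ?_⟩
    intro x y z hd
    have := hη.real ⟨T, hT.le⟩ x y z hd
    have h2 := dist_nonneg (x := f x) (y := f z)
    linarith

lemma WQS.comp {A B C : Type*} [MetricSpace A] [MetricSpace B] [MetricSpace C] {f : A → B}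
    {g : B → C} (hg : WQS g) (hf : WQS f) : WQS (g ∘ f) := by
  constructor
  · intro ε hε
    obtain ⟨δ, hδ, h1⟩ := hg.1 ε hε
    obtain ⟨δ', hδ', h2⟩ := hf.1 δ hδ
    exact ⟨δ', hδ', fun x y z h => h1 _ _ _ (h2 _ _ _ h)⟩
  · intro ε hε
    obtain ⟨δ, hδ, h1⟩ := hf.2 ε hε
    obtain ⟨δ', hδ', h2⟩ := hg.2 δ hδ
    exact ⟨δ', hδ', fun x y z h => h2 _ _ _ (h1 _ _ _ h)⟩

lemma WQS.symm {A B : Type*} [MetricSpace A] [MetricSpace B] (e : A ≃ B)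
    (h : WQS (e : A → B)) : WQS (e.symm : B → A) := by
  constructor
  · intro ε hε
    obtain ⟨H, hH, h1⟩ := h.2 (1 / ε) (by positivity)
    refine ⟨1 / (2 * H), by positivity, ?_⟩
    intro x y z hd
    obtain ⟨x, rfl⟩ := e.surjective x
    obtain ⟨y, rfl⟩ := e.surjective y
    obtain ⟨z, rfl⟩ := e.surjective z
    simp only [Equiv.symm_apply_apply]
    by_contra hc
    push Not at hc
    have h2 := h1 x z y (by rw [div_mul_eq_mul_div, le_div_iff₀ hε]; linarith)
    have h3 : dist (e x) (e y) ≤ 1 / 2 * dist (e x) (e y) := by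
      calc dist (e x) (e y) ≤ 1 / (2 * H) * dist (e x) (e z) := hd
        _ ≤ 1 / (2 * H) * (H * dist (e x) (e y)) := by gcongr
        _ = _ := by field_simp
    have h4 : dist (e x) (e y) = 0 := by
      have := dist_nonneg (x := e x) (y := e y); linarith
    have h5 : x = y := e.injective (dist_eq_zero.mp h4)
    subst h5
    have := dist_nonneg (x := x) (y := z)
    rw [dist_self] at hc
    nlinarith
  · intro T hT
    obtain ⟨δ, hδ, h1⟩ := h.1 (1 / (2 * T)) (by positivity)
    refine ⟨1 / δ, by positivity, ?_⟩
    intro x y z hd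
    obtain ⟨x, rfl⟩ := e.surjective x
    obtain ⟨y, rfl⟩ := e.surjective y
    obtain ⟨z, rfl⟩ := e.surjective z
    simp only [Equiv.symm_apply_apply]
    by_contra hc
    push Not at hc
    have h0 : dist x z ≤ δ * dist x y := by
      rw [div_mul_eq_mul_div, div_lt_iff₀ hδ] at hc; linarith
    have h2 := h1 x z y h0
    have h3 : dist (e x) (e z) ≤ 1 / 2 * dist (e x) (e z) := by
      calc dist (e x) (e z) ≤ 1 / (2 * T) * dist (e x) (e y) := h2
        _ ≤ 1 / (2 * T) * (T * dist (e x) (e z)) := by gcongr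
        _ = _ := by field_simp
    have h4 : dist (e x) (e z) = 0 := by
      have := dist_nonneg (x := e x) (y := e z); linarith
    rw [h4, mul_zero] at hd
    have h6 : x = y := e.injective (dist_eq_zero.mp (le_antisymm hd dist_nonneg))
    subst h6
    rw [dist_self] at hc
    have := dist_nonneg (x := x) (y := z)
    have : 0 ≤ 1 / δ * dist x z := by positivity
    linarith

lemma WQS.continuous {A B : Type*} [MetricSpace A] [MetricSpace B] [Nontrivial A] {f : A → B}
    (h : WQS f) : Continuous f := by
  rw [Metric.continuous_iff]
  intro x ε hε
  obtain ⟨z, hz⟩ := exists_ne x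
  have hz' : 0 < dist x z := dist_pos.mpr hz.symm
  obtain ⟨δ, hδ, h1⟩ := h.1 (ε / (2 * (dist (f x) (f z) + 1))) (by positivity)
  refine ⟨δ * dist x z, by positivity, ?_⟩
  intro y hy
  have h2 := h1 x y z (by rw [dist_comm]; exact hy.le)
  rw [dist_comm]
  refine h2.trans_lt ?_
  rw [div_mul_eq_mul_div, div_lt_iff₀ (by positivity)]
  have := dist_nonneg (x := f x) (y := f z)
  nlinarith

lemma WQS.cauchySeq {A B : Type*} [MetricSpace A] [MetricSpace B] [Nontrivial A] {f : A → B}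
    (h : WQS f) {u : ℕ → A} (hu : CauchySeq u) : CauchySeq (f ∘ u) := by
  obtain ⟨a, b, hab⟩ := exists_pair_ne A
  have hab' : 0 < dist a b := dist_pos.mpr hab
  set s := dist a b / 4 with hs
  have hs0 : 0 < s := by positivity
  rw [Metric.cauchySeq_iff] at hu
  obtain ⟨N0, hN0⟩ := hu s hs0
  -- a point `p` which stays away from the tail
  obtain ⟨p, hp⟩ : ∃ p : A, ∀ n ≥ N0, s ≤ dist (u n) p := by
    by_cases hc : 2 * s ≤ dist (u N0) a
    · refine ⟨a, fun n hn => ?_⟩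
      have := dist_triangle (u N0) (u n) a
      have := hN0 N0 le_rfl n hn
      linarith
    · refine ⟨b, fun n hn => ?_⟩
      have := dist_triangle (u N0) (u n) b
      have := hN0 N0 le_rfl n hn
      have := dist_triangle_left a b (u N0)
      push Not at hc
      linarith
  obtain ⟨δ1, hδ1, h1⟩ := h.1 1 one_pos
  obtain ⟨N1, hN1⟩ := hu (δ1 * s) (by positivity)
  set N2 := max N0 N1 with hN2
  set D := 2 * dist (f (u N2)) (f p) + 1 with hD
  have hDp : 0 < D := by positivity
  have hb : ∀ n ≥ N2, dist (f (u n)) (f p) ≤ D := by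
    intro n hn
    have h3 : dist (u N2) (u n) ≤ δ1 * dist (u N2) p := by
      have := hN1 N2 (le_max_right _ _) n ((le_max_right _ _).trans hn)
      have h4 := hp N2 (le_max_left _ _)
      nlinarith
    have h5 := h1 _ _ _ h3
    have h6 := dist_triangle_left (f (u n)) (f p) (f (u N2))
    linarith
  rw [Metric.cauchySeq_iff]
  intro ε hε
  obtain ⟨δ, hδ, h2⟩ := h.1 (ε / (2 * D)) (by positivity)
  obtain ⟨N3, hN3⟩ := hu (δ * s) (by positivity)
  refine ⟨max N2 N3, fun m hm n hn => ?_⟩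
  have hm2 : N2 ≤ m := (le_max_left _ _).trans hm
  have hm3 : N3 ≤ m := (le_max_right _ _).trans hm
  have hn3 : N3 ≤ n := (le_max_right _ _).trans hn
  have h3 : dist (u m) (u n) ≤ δ * dist (u m) p := by
    have := hN3 m hm3 n hn3
    have h4 := hp m ((le_max_left _ _).trans hm2)
    nlinarith
  have h4 := h2 _ _ _ h3
  have h5 := hb m hm2
  calc dist (f (u m)) (f (u n)) ≤ ε / (2 * D) * dist (f (u m)) (f p) := h4
    _ ≤ ε / (2 * D) * D := by gcongr
    _ = ε / 2 := by field_simp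
    _ < ε := by linarith

lemma WQS.complete {A B : Type*} [MetricSpace A] [MetricSpace B] [Nontrivial A] (e : A ≃ B)
    (h : WQS (e : A → B)) [CompleteSpace A] : CompleteSpace B := by
  haveI : Nontrivial B := e.symm.nontrivial
  apply Metric.complete_of_cauchySeq_tendsto
  intro u hu
  obtain ⟨a, ha⟩ := cauchySeq_tendsto_of_complete ((WQS.symm e h).cauchySeq hu)
  refine ⟨e a, ?_⟩
  have := (h.continuous.tendsto a).comp ha
  simpa [Function.comp_def] using this

/-- Uniform perfectness. -/
def UP (A : Type*) [MetricSpace A] : Prop :=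
  ∃ c : ℝ, 0 < c ∧ ∀ x z : A, ∀ R : ℝ, 0 < R → R ≤ dist x z →
    ∃ y : A, c * R ≤ dist x y ∧ dist x y ≤ R / 2

lemma UP_of_step {A : Type*} [MetricSpace A]
    (h : ∃ c : ℝ, 0 < c ∧ ∀ x z : A, x ≠ z →
      ∃ y : A, c * dist x z ≤ dist x y ∧ dist x y ≤ dist x z / 2) : UP A := by
  obtain ⟨c, hc, h⟩ := h
  refine ⟨c / 2, by positivity, ?_⟩
  intro x z R hR hRz
  have hxz : x ≠ z := by
    intro h; subst h; rw [dist_self] at hRz; linarith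
  have key : ∀ n : ℕ, (∃ y, c / 2 * R ≤ dist x y ∧ dist x y ≤ R / 2) ∨
      ∃ y, R / 2 < dist x y ∧ dist x y ≤ dist x z / 2 ^ n := by
    intro n
    induction n with
    | zero => right; exact ⟨z, by linarith, by simp⟩
    | succ n ih =>
      rcases ih with ih | ⟨y, hy1, hy2⟩
      · exact Or.inl ih
      · have hxy : x ≠ y := by
          intro h; subst h; rw [dist_self] at hy1; linarith
        obtain ⟨y', h1, h2⟩ := h x y hxy
        by_cases hc' : dist x y' ≤ R / 2
        · left; refine ⟨y', ?_, hc'⟩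
          nlinarith
        · right; refine ⟨y', not_le.mp hc', ?_⟩
          rw [pow_succ, ← div_div]; linarith
  obtain ⟨n, hn⟩ := exists_pow_lt_of_lt_one (x := R / 2 / dist x z) (y := (1/2 : ℝ))
    (by have := dist_pos.mpr hxz; positivity) (by norm_num)
  rcases key n with h | ⟨y, h1, h2⟩
  · exact h
  · exfalso
    rw [lt_div_iff₀ (dist_pos.mpr hxz)] at hn
    have : dist x z / 2 ^ n = (1/2)^n * dist x z := by
      rw [one_div, inv_pow]; field_simp
    linarith

lemma edist_le_ediam_univ {A : Type*} [MetricSpace A] (x z : A) (r : ℝ) (h : r ≤ dist x z) :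
    ENNReal.ofReal r ≤ Metric.ediam (Set.univ : Set A) := by
  refine le_trans ?_ (Metric.edist_le_ediam_of_mem (Set.mem_univ x) (Set.mem_univ z))
  rw [edist_dist]
  exact ENNReal.ofReal_le_ofReal h

lemma UP_transfer {V B : Type*} [MetricSpace V] [MetricSpace B] (e : V ≃ B)
    (h : WQS (e : V → B)) {S : ℝ} (hS : 0 < S) (hV : AhlforsRegular V S) : UP B := by
  obtain ⟨_, _, _, μ, C, hC, hμ⟩ := hV
  apply UP_of_step
  obtain ⟨δ, hδ, h1⟩ := h.1 (1/2) (by norm_num)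
  set δ1 := min δ 1 with hδ1
  have hδ1p : 0 < δ1 := lt_min hδ one_pos
  -- choose `δ2`
  obtain ⟨δ2, hδ2, hδ2le, hcomp⟩ : ∃ δ2 : ℝ, 0 < δ2 ∧ δ2 ≤ 1 ∧ C * δ2 ^ S < C⁻¹ * δ1 ^ S := by
    have hpos : 0 < C⁻¹ * C⁻¹ * δ1 ^ S / 2 := by positivity
    refine ⟨min 1 ((C⁻¹ * C⁻¹ * δ1 ^ S / 2) ^ (1 / S)), by positivity, min_le_left _ _, ?_⟩
    have h3 : (min 1 ((C⁻¹ * C⁻¹ * δ1 ^ S / 2) ^ (1 / S))) ^ S ≤ C⁻¹ * C⁻¹ * δ1 ^ S / 2 := by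
      calc _ ≤ ((C⁻¹ * C⁻¹ * δ1 ^ S / 2) ^ (1 / S)) ^ S := by
            gcongr; exact min_le_right _ _
        _ = _ := by
            rw [← Real.rpow_mul hpos.le, one_div, inv_mul_cancel₀ hS.ne', Real.rpow_one]
    calc _ ≤ C * (C⁻¹ * C⁻¹ * δ1 ^ S / 2) := by gcongr
      _ = C⁻¹ * δ1 ^ S / 2 := by field_simp
      _ < _ := by
        have : 0 < C⁻¹ * δ1 ^ S := by positivity
        linarith
  obtain ⟨H, hH, h2⟩ := h.2 (1 / δ2) (by positivity)
  refine ⟨1 / H, by positivity, ?_⟩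
  intro x z hxz
  obtain ⟨v, rfl⟩ := e.surjective x
  obtain ⟨v1, rfl⟩ := e.surjective z
  have hv : v ≠ v1 := fun h => hxz (by rw [h])
  set D := dist v v1 with hD
  have hDp : 0 < D := dist_pos.mpr hv
  have hb1 := (hμ v (δ1 * D) (by positivity) (edist_le_ediam_univ v v1 _ (by
    have : δ1 ≤ 1 := min_le_right _ _
    nlinarith))).1
  have hb2 := (hμ v (δ2 * D) (by positivity) (edist_le_ediam_univ v v1 _ (by nlinarith))).2
  have hlt : μ (Metric.ball v (δ2 * D)) < μ (Metric.ball v (δ1 * D)) := by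
    refine hb2.trans_lt (lt_of_lt_of_le ?_ hb1)
    rw [ENNReal.ofReal_lt_ofReal_iff (by positivity), Real.mul_rpow hδ2.le hDp.le,
      Real.mul_rpow hδ1p.le hDp.le]
    have : 0 < D ^ S := by positivity
    nlinarith
  obtain ⟨w, hw1, hw2⟩ : ∃ w, w ∈ Metric.ball v (δ1 * D) ∧ w ∉ Metric.ball v (δ2 * D) := by
    by_contra hc
    push Not at hc
    exact absurd (MeasureTheory.measure_mono (μ := μ) (fun w hw => hc w hw)) (not_le.mpr hlt)
  rw [Metric.mem_ball, dist_comm] at hw1 hw2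
  push Not at hw2
  refine ⟨e w, ?_, ?_⟩
  · have := h2 v v1 w (by rw [div_mul_eq_mul_div, le_div_iff₀ hδ2]; linarith)
    rw [div_mul_eq_mul_div, div_le_iff₀ hH]; linarith
  · have := h1 v w v1 (by
      have : δ1 ≤ δ := min_le_left _ _
      nlinarith)
    linarith

/-! ### Separated nets, porosity and counting -/

lemma exists_net {A : Type*} [MetricSpace A] (S : Set A) (s : ℝ) (hs : 0 < s) :
    ∃ T : Set A, T ⊆ S ∧ (∀ a ∈ T, ∀ b ∈ T, a ≠ b → s ≤ dist a b) ∧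
      ∀ x ∈ S, ∃ t ∈ T, dist x t < s := by
  obtain ⟨T, hT⟩ := zorn_subset {T : Set A | T ⊆ S ∧ ∀ a ∈ T, ∀ b ∈ T, a ≠ b → s ≤ dist a b} (by
    intro c hc hchain
    refine ⟨⋃₀ c, ⟨Set.sUnion_subset fun t ht => (hc ht).1, ?_⟩,
      fun t ht => Set.subset_sUnion_of_mem ht⟩
    rintro a ⟨t, ht, hat⟩ b ⟨t', ht', hbt'⟩ hab
    rcases hchain.total ht ht' with h | h
    · exact (hc ht').2 a (h hat) b hbt' hab
    · exact (hc ht).2 a hat b (h hbt') hab)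
  refine ⟨T, hT.prop.1, hT.prop.2, ?_⟩
  intro x hx
  by_contra hc
  push Not at hc
  have hmem : insert x T ∈ {T : Set A | T ⊆ S ∧ ∀ a ∈ T, ∀ b ∈ T, a ≠ b → s ≤ dist a b} := by
    refine ⟨Set.insert_subset hx hT.prop.1, ?_⟩
    rintro a (rfl | ha) b (rfl | hb) hab
    · exact absurd rfl hab
    · exact hc b hb
    · rw [dist_comm]; exact hc a ha
    · exact hT.prop.2 a ha b hb hab
  have h1 := hT.le_of_ge hmem (Set.subset_insert x T)
  have h2 : x ∈ T := h1 (Set.mem_insert x T)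
  have := hc x h2
  rw [dist_self] at this
  linarith

lemma porous_transfer {X W : Type*} [MetricSpace X] [MetricSpace W] (Y : Set X) (hp : Porous Y)
    (e : X ≃ W) (h : WQS (e : X → W)) (hUP : UP (e '' Y)) :
    ∃ c : ℝ, 0 < c ∧ c ≤ 1 ∧ ∀ y ∈ e '' Y, ∀ y1 ∈ e '' Y, ∀ r : ℝ, 0 < r → r ≤ dist y y1 →
      ∃ w : W, dist w y < r ∧ ∀ y2 ∈ e '' Y, c * r ≤ dist w y2 := by
  obtain ⟨p, hp0, hp⟩ := hp
  obtain ⟨c, hc, hUP⟩ := hUP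
  obtain ⟨δ', hδ', h1'⟩ := h.1 (1/2) (by norm_num)
  obtain ⟨δ, hδ, hδ1, h1⟩ : ∃ δ : ℝ, 0 < δ ∧ δ ≤ 1 ∧ ∀ x y z : X, dist x y ≤ δ * dist x z →
      dist (e x) (e y) ≤ 1/2 * dist (e x) (e z) := by
    refine ⟨min δ' 1, by positivity, min_le_right _ _, fun x y z hd => h1' x y z (hd.trans ?_)⟩
    gcongr; exact min_le_left _ _
  obtain ⟨H, hH, h2⟩ := h.2 (1 / p * (1 + 1 / δ)) (by positivity)
  refine ⟨min (c / (2 * H)) 1, by positivity, min_le_right _ _, ?_⟩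
  intro y hy y1 hy1 r hr hry
  obtain ⟨⟨y', hy'⟩, hd1, hd2⟩ := hUP ⟨y, hy⟩ ⟨y1, hy1⟩ r hr hry
  simp only [Subtype.dist_eq] at hd1 hd2
  obtain ⟨x, hx, rfl⟩ := hy
  obtain ⟨x', hx', rfl⟩ := hy'
  have hxx : 0 < dist x x' := by
    apply dist_pos.mpr
    rintro rfl
    rw [dist_self] at hd1
    have : 0 < c * r := by positivity
    linarith
  obtain ⟨q, hq⟩ := hp x hx (δ * dist x x') (by positivity)
    (edist_le_ediam_univ x x' _ (by nlinarith))
  have hq1 : dist q x < δ * dist x x' :=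
    Metric.mem_ball.mp (hq (Metric.mem_ball_self (by positivity))).1
  have hq2 : ∀ y2 ∈ Y, p * (δ * dist x x') ≤ dist q y2 := by
    intro y2 hy2
    by_contra hcon
    push Not at hcon
    rw [dist_comm] at hcon
    exact (hq (Metric.mem_ball.mpr hcon)).2 hy2
  have hw := h1 x q x' (by rw [dist_comm]; exact hq1.le)
  refine ⟨e q, ?_, ?_⟩
  · rw [dist_comm]
    linarith
  · rintro _ ⟨y2, hy2, rfl⟩
    have h3 := hq2 y2 hy2
    have h4 : dist q x' ≤ 1 / p * (1 + 1 / δ) * dist q y2 := by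
      have h5 := dist_triangle q x x'
      have h6 : dist q x' ≤ (1 + 1 / δ) * (δ * dist x x') := by
        have : (1 + 1 / δ) * (δ * dist x x') = δ * dist x x' + dist x x' := by field_simp
        linarith
      calc dist q x' ≤ (1 + 1 / δ) * (δ * dist x x') := h6
        _ = 1 / p * (1 + 1 / δ) * (p * (δ * dist x x')) := by field_simp
        _ ≤ _ := by gcongr
    have h5 := h2 q x' y2 h4
    have h6 := dist_triangle (e x) (e q) (e x')
    have h7 : c * r / 2 ≤ H * dist (e q) (e y2) := by linarith
    calc min (c / (2 * H)) 1 * r ≤ c / (2 * H) * r := by gcongr; exact min_le_left _ _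
      _ = (c * r / 2) / H := by field_simp
      _ ≤ _ := by rw [div_le_iff₀ hH]; linarith

open MeasureTheory in
/-- The counting estimate at a single scale `t`. -/
lemma count_scale {W : Type*} [MetricSpace W] [MeasurableSpace W] [BorelSpace W] (μ : Measure W)
    {C Q c D R s t : ℝ} (hC : 1 ≤ C) (hc : 0 < c) (hc1 : c ≤ 1)
    (hμ : ∀ w : W, ∀ r : ℝ, 0 < r → r ≤ D → C⁻¹ * r ^ Q ≤ μ.real (Metric.ball w r) ∧
      μ.real (Metric.ball w r) ≤ C * r ^ Q ∧ μ (Metric.ball w r) ≠ ⊤)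
    (Y : Set W) (y : W) (F : Finset W) (hFY : ∀ a ∈ F, a ∈ Y) (hFy : ∀ a ∈ F, dist a y ≤ R)
    (hFs : ∀ a ∈ F, ∀ b ∈ F, a ≠ b → s ≤ dist a b) (hs : 0 < s) (hst : s ≤ t)
    (htR : 2 * t ≤ R) (hRD : 8 * R ≤ D)
    (hP : ∀ a ∈ F, ∃ w, dist w a < t ∧ ∀ y2 ∈ Y, c * t ≤ dist w y2) :
    F.card * s ^ Q ≤ C ^ 3 * (2 ^ Q * 5 ^ Q * (2 / c) ^ Q) *
      μ.real ({z | c * t / 2 ≤ Metric.infDist z Y ∧ Metric.infDist z Y < 3 / 2 * t} ∩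
        Metric.ball y (3 * R)) := by
  set E := ({z | c * t / 2 ≤ Metric.infDist z Y ∧ Metric.infDist z Y < 3 / 2 * t} ∩
        Metric.ball y (3 * R)) with hE
  have ht : 0 < t := hs.trans_le hst
  have hR : 0 < R := by linarith
  have hEfin : μ E ≠ ⊤ := measure_ne_top_of_subset Set.inter_subset_right
    (hμ y (3 * R) (by positivity) (by linarith)).2.2
  obtain ⟨T, hTF, hTs, hTc⟩ := exists_net (F : Set W) (4 * t) (by positivity)
  have hTfin : T.Finite := F.finite_toSet.subset hTF
  lift T to Finset W using hTfin
  choose! w hw1 hw2 using hP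
  -- holes
  have hA : T.card * (C⁻¹ * (c * t / 2) ^ Q) ≤ μ.real E := by
    have hdisj : (T : Set W).PairwiseDisjoint (fun a => Metric.ball (w a) (c * t / 2)) := by
      intro a ha b hb hab
      apply Set.disjoint_left.mpr
      intro z hz1 hz2
      rw [Metric.mem_ball] at hz1 hz2
      have h1 := hTs a ha b hb hab
      have h2 := hw1 a (hTF ha)
      have h3 := hw1 b (hTF hb)
      have h4 := dist_triangle4 a (w a) (w b) b
      have h5 := dist_triangle_left (w a) (w b) z
      rw [dist_comm a (w a)] at h4
      nlinarith
    have hsub : (⋃ a ∈ T, Metric.ball (w a) (c * t / 2)) ⊆ E := by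
      intro z hz
      simp only [Set.mem_iUnion, Metric.mem_ball] at hz
      obtain ⟨a, ha, hz⟩ := hz
      have haF := hTF ha
      have haY := hFY a haF
      have h2 := hw1 a haF
      have hza : dist z a < 3 / 2 * t := by
        have := dist_triangle z (w a) a
        nlinarith
      refine ⟨⟨?_, ?_⟩, ?_⟩
      · apply (Metric.le_infDist ⟨a, haY⟩).mpr
        intro y2 hy2
        have h3 := hw2 a haF y2 hy2
        have h4 := dist_triangle (w a) z y2
        rw [dist_comm (w a) z] at h4
        linarith
      · exact (Metric.infDist_le_dist_of_mem haY).trans_lt hza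
      · rw [Metric.mem_ball]
        have := dist_triangle z a y
        have := hFy a haF
        linarith
    calc T.card * (C⁻¹ * (c * t / 2) ^ Q) = ∑ a ∈ T, C⁻¹ * (c * t / 2) ^ Q := by
          rw [Finset.sum_const, nsmul_eq_mul]
      _ ≤ ∑ a ∈ T, μ.real (Metric.ball (w a) (c * t / 2)) := by
          apply Finset.sum_le_sum
          intro a _
          exact (hμ (w a) (c * t / 2) (by positivity) (by nlinarith)).1
      _ = μ.real (⋃ a ∈ T, Metric.ball (w a) (c * t / 2)) := by
          rw [measureReal_biUnion_finset hdisj (fun _ _ => measurableSet_ball)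
            (fun a _ => (hμ (w a) (c * t / 2) (by positivity) (by nlinarith)).2.2)]
      _ ≤ μ.real E := measureReal_mono hsub hEfin
  have hB : F.card * (C⁻¹ * (s / 2) ^ Q) ≤ T.card * (C * (5 * t) ^ Q) := by
    have hdisj : (F : Set W).PairwiseDisjoint (fun a => Metric.ball a (s / 2)) := by
      intro a ha b hb hab
      apply Set.disjoint_left.mpr
      intro z hz1 hz2
      rw [Metric.mem_ball] at hz1 hz2
      have h1 := hFs a ha b hb hab
      have h5 := dist_triangle_left a b z
      linarith
    have hsub : (⋃ a ∈ F, Metric.ball a (s / 2)) ⊆ ⋃ a ∈ T, Metric.ball a (5 * t) := by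
      intro z hz
      simp only [Set.mem_iUnion, Metric.mem_ball] at hz ⊢
      obtain ⟨a, ha, hz⟩ := hz
      obtain ⟨b, hb, hab⟩ := hTc a ha
      refine ⟨b, hb, ?_⟩
      have := dist_triangle z a b
      linarith
    have hfin5 : ∀ a ∈ T, μ (Metric.ball a (5 * t)) < ⊤ := fun a _ =>
      (hμ a (5 * t) (by positivity) (by linarith)).2.2.lt_top
    calc F.card * (C⁻¹ * (s / 2) ^ Q) = ∑ a ∈ F, C⁻¹ * (s / 2) ^ Q := by
          rw [Finset.sum_const, nsmul_eq_mul]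
      _ ≤ ∑ a ∈ F, μ.real (Metric.ball a (s / 2)) := by
          apply Finset.sum_le_sum
          intro a _
          exact (hμ a (s / 2) (by positivity) (by linarith)).1
      _ = μ.real (⋃ a ∈ F, Metric.ball a (s / 2)) := by
          rw [measureReal_biUnion_finset hdisj (fun _ _ => measurableSet_ball)
            (fun a _ => (hμ a (s / 2) (by positivity) (by linarith)).2.2)]
      _ ≤ μ.real (⋃ a ∈ T, Metric.ball a (5 * t)) :=
          measureReal_mono hsub (measure_biUnion_lt_top T.finite_toSet hfin5).ne
      _ ≤ ∑ a ∈ T, μ.real (Metric.ball a (5 * t)) := measureReal_biUnion_finset_le _ _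
      _ ≤ ∑ a ∈ T, C * (5 * t) ^ Q := by
          apply Finset.sum_le_sum
          intro a _
          exact (hμ a (5 * t) (by positivity) (by linarith)).2.1
      _ = _ := by rw [Finset.sum_const, nsmul_eq_mul]
  have e1 : (s / 2) ^ Q = s ^ Q / 2 ^ Q := Real.div_rpow hs.le (by norm_num) Q
  have e2 : (5 * t) ^ Q = 5 ^ Q * t ^ Q := Real.mul_rpow (by norm_num) ht.le
  have e3 : (c * t / 2) ^ Q = t ^ Q / (2 / c) ^ Q := by
    rw [← Real.div_rpow ht.le (by positivity)]; congr 1; field_simp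
  rw [e3] at hA
  rw [e1, e2] at hB
  have hC0 : 0 < C := by linarith
  have p2 : 0 < (2 : ℝ) ^ Q := by positivity
  have p5 : 0 < (5 : ℝ) ^ Q := by positivity
  have pc : 0 < (2 / c) ^ Q := by positivity
  have pt : 0 < t ^ Q := by positivity
  have hA' : T.card * t ^ Q ≤ C * (2 / c) ^ Q * μ.real E := by
    have h1 : T.card * t ^ Q = C * (2 / c) ^ Q * (T.card * (C⁻¹ * (t ^ Q / (2 / c) ^ Q))) := by
      field_simp
    rw [h1]; gcongr
  calc F.card * s ^ Q = C * 2 ^ Q * (F.card * (C⁻¹ * (s ^ Q / 2 ^ Q))) := by field_simp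
    _ ≤ C * 2 ^ Q * (T.card * (C * (5 ^ Q * t ^ Q))) := by gcongr
    _ = C * 2 ^ Q * C * 5 ^ Q * (T.card * t ^ Q) := by ring
    _ ≤ C * 2 ^ Q * C * 5 ^ Q * (C * (2 / c) ^ Q * μ.real E) := by gcongr
    _ = _ := by ring

open MeasureTheory in
/-- The multi-scale counting estimate. -/
lemma count_multi {W : Type*} [MetricSpace W] [MeasurableSpace W] [BorelSpace W] (μ : Measure W)
    {C Q c : ℝ} (hC : 1 ≤ C) (hc : 0 < c) (hc1 : c ≤ 1)
    (hμ : ∀ w : W, ∀ r : ℝ, 0 < r → ENNReal.ofReal r ≤ Metric.ediam (Set.univ : Set W) →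
        ENNReal.ofReal (C⁻¹ * r ^ Q) ≤ μ (Metric.ball w r) ∧
          μ (Metric.ball w r) ≤ ENNReal.ofReal (C * r ^ Q))
    (Y : Set W)
    (hP : ∀ y ∈ Y, ∀ y1 ∈ Y, ∀ r : ℝ, 0 < r → r ≤ dist y y1 →
      ∃ w : W, dist w y < r ∧ ∀ y2 ∈ Y, c * r ≤ dist w y2)
    (J : ℕ) (R : ℝ) (hR : 0 < R) (hAdm : ∃ a ∈ Y, ∃ b ∈ Y, 8 * R ≤ dist a b) (y : W)
    (F : Finset W) (hFY : ∀ a ∈ F, a ∈ Y) (hFy : ∀ a ∈ F, dist a y ≤ R)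
    (hFs : ∀ a ∈ F, ∀ b ∈ F, a ≠ b → R / (4 / c) ^ J ≤ dist a b) :
    J * (F.card : ℝ) ≤ (C ^ 3 * (2 ^ Q * 5 ^ Q * (2 / c) ^ Q) * (C * 3 ^ Q)) *
      ((4 / c) ^ J) ^ Q := by
  obtain ⟨a, ha, b, hb, hab⟩ := hAdm
  have hC0 : 0 < C := by linarith
  have hμ' : ∀ w : W, ∀ r : ℝ, 0 < r → r ≤ dist a b → C⁻¹ * r ^ Q ≤ μ.real (Metric.ball w r) ∧
      μ.real (Metric.ball w r) ≤ C * r ^ Q ∧ μ (Metric.ball w r) ≠ ⊤ := by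
    intro w r hr hrd
    obtain ⟨h1, h2⟩ := hμ w r hr (edist_le_ediam_univ a b r hrd)
    have h3 : μ (Metric.ball w r) ≠ ⊤ := (h2.trans_lt ENNReal.ofReal_lt_top).ne
    refine ⟨(ENNReal.ofReal_le_iff_le_toReal h3).mp h1, ?_, h3⟩
    exact ENNReal.toReal_le_of_le_ofReal (by positivity) h2
  set K := 4 / c with hK
  have hK4 : 4 ≤ K := by rw [hK, le_div_iff₀ hc]; linarith
  have hK0 : 0 < K := by linarith
  set s := R / K ^ J with hs
  have hs0 : 0 < s := by positivity
  set A : ℕ → Set W := fun j => {z | c * (K ^ j * s) / 2 ≤ Metric.infDist z Y ∧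
    Metric.infDist z Y < 3 / 2 * (K ^ j * s)} ∩ Metric.ball y (3 * R) with hA
  have hscale : ∀ j ∈ Finset.range J, F.card * s ^ Q ≤
      C ^ 3 * (2 ^ Q * 5 ^ Q * (2 / c) ^ Q) * μ.real (A j) := by
    intro j hj
    rw [Finset.mem_range] at hj
    have h1 : 1 ≤ K ^ j := one_le_pow₀ (by linarith)
    have h2 : 4 * (K ^ j * s) ≤ R := by
      have h3 : K ^ j * 4 ≤ K ^ J := by
        calc K ^ j * 4 ≤ K ^ j * K := by gcongr
          _ = K ^ (j + 1) := (pow_succ _ _).symm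
          _ ≤ K ^ J := pow_le_pow_right₀ (by linarith) hj
      rw [hs, ← mul_assoc, mul_div_assoc', div_le_iff₀ (by positivity)]
      nlinarith
    refine count_scale μ hC hc hc1 hμ' Y y F hFY hFy hFs hs0 (by nlinarith) (by linarith) hab ?_
    intro z hz
    have hzY := hFY z hz
    have h0 : 0 < K ^ j * s := by positivity
    by_cases hza : K ^ j * s ≤ dist z a
    · exact hP z hzY a ha _ h0 hza
    · refine hP z hzY b hb _ h0 ?_
      have := dist_triangle_left a b z
      push Not at hza
      linarith
  have hmeas : ∀ j, MeasurableSet (A j) := by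
    intro j
    refine MeasurableSet.inter ?_ measurableSet_ball
    exact (measurableSet_le measurable_const (Metric.continuous_infDist_pt Y).measurable).inter
      (measurableSet_lt (Metric.continuous_infDist_pt Y).measurable measurable_const)
  have hdisj : ((Finset.range J : Finset ℕ) : Set ℕ).PairwiseDisjoint A := by
    have hlt : ∀ i j : ℕ, i < j → Disjoint (A i) (A j) := by
      intro i j hij
      apply Set.disjoint_left.mpr
      rintro z ⟨⟨_, h1⟩, _⟩ ⟨⟨h2, _⟩, _⟩
      have h3 : K ^ i * K ≤ K ^ j := by
        rw [← pow_succ]; exact pow_le_pow_right₀ (by linarith) hij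
      have h4 : c * (K ^ i * K * s) ≤ c * (K ^ j * s) := by gcongr
      have h5 : c * (K ^ i * K * s) = 4 * (K ^ i * s) := by rw [hK]; field_simp
      have : 0 < K ^ i * s := by positivity
      linarith
    intro i _ j _ hij
    rcases lt_or_gt_of_ne hij with h | h
    · exact hlt i j h
    · exact (hlt j i h).symm
  have hbig := hμ' y (3 * R) (by positivity) (by linarith)
  have hsum : ∑ j ∈ Finset.range J, μ.real (A j) ≤ C * (3 * R) ^ Q := by
    rw [← measureReal_biUnion_finset hdisj (fun j _ => hmeas j)
      (fun j _ => measure_ne_top_of_subset Set.inter_subset_right hbig.2.2)]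
    refine (measureReal_mono ?_ hbig.2.2).trans hbig.2.1
    exact Set.iUnion₂_subset fun j _ => Set.inter_subset_right
  have h1 : J * (F.card * s ^ Q) ≤
      C ^ 3 * (2 ^ Q * 5 ^ Q * (2 / c) ^ Q) * (C * (3 * R) ^ Q) := by
    calc J * (F.card * s ^ Q) = ∑ j ∈ Finset.range J, F.card * s ^ Q := by
          rw [Finset.sum_const, nsmul_eq_mul, Finset.card_range]
      _ ≤ ∑ j ∈ Finset.range J, C ^ 3 * (2 ^ Q * 5 ^ Q * (2 / c) ^ Q) * μ.real (A j) :=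
          Finset.sum_le_sum hscale
      _ = C ^ 3 * (2 ^ Q * 5 ^ Q * (2 / c) ^ Q) * ∑ j ∈ Finset.range J, μ.real (A j) := by
          rw [Finset.mul_sum]
      _ ≤ _ := by gcongr
  have e1 : s ^ Q = R ^ Q / (K ^ J) ^ Q := Real.div_rpow hR.le (by positivity) Q
  have e2 : (3 * R) ^ Q = 3 ^ Q * R ^ Q := Real.mul_rpow (by norm_num) hR.le
  rw [e1, e2] at h1
  have pR : 0 < R ^ Q := by positivity
  have pK : 0 < (K ^ J) ^ Q := by positivity
  have h2 := mul_le_mul_of_nonneg_right h1 (show 0 ≤ (K ^ J) ^ Q / R ^ Q by positivity)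
  calc J * (F.card : ℝ) = J * (F.card * (R ^ Q / (K ^ J) ^ Q)) * ((K ^ J) ^ Q / R ^ Q) := by
        field_simp
    _ ≤ _ := h2
    _ = _ := by field_simp

/-- `Cov Z L N`: at every admissible scale `R`, an `R / L`-separated subset of a ball of radius
`R` has at most `N` points. -/
def Cov (Z : Type*) [MetricSpace Z] (L : ℝ) (N : ℕ) : Prop :=
  ∀ R : ℝ, 0 < R → (∃ a b : Z, 8 * R ≤ dist a b) → ∀ y : Z, ∀ F : Finset Z,
    (∀ a ∈ F, dist a y ≤ R) → (∀ a ∈ F, ∀ b ∈ F, a ≠ b → R / L ≤ dist a b) → F.card ≤ N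

lemma exists_cov {W : Type*} [MetricSpace W] {Q : ℝ} (hQ : 0 < Q) (hW : AhlforsRegular W Q)
    (Y : Set W) {c : ℝ} (hc : 0 < c) (hc1 : c ≤ 1)
    (hP : ∀ y ∈ Y, ∀ y1 ∈ Y, ∀ r : ℝ, 0 < r → r ≤ dist y y1 →
      ∃ w : W, dist w y < r ∧ ∀ y2 ∈ Y, c * r ≤ dist w y2) :
    ∃ (β L : ℝ) (N : ℕ), 0 < β ∧ β < Q ∧ 100 ≤ L ∧ 2 * (N : ℝ) ≤ L ^ β ∧ Cov Y L N := by
  obtain ⟨_, _, _, μ, C, hC, hμ⟩ := hW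
  have hC0 : 0 < C := by linarith
  set B := C ^ 3 * (2 ^ Q * 5 ^ Q * (2 / c) ^ Q) * (C * 3 ^ Q) with hB
  have hB0 : 0 < B := by positivity
  obtain ⟨J0, hJ0⟩ := exists_nat_gt (4 * B)
  set J := max J0 4 with hJ
  have hJB : 4 * B < J := hJ0.trans_le (by exact_mod_cast le_max_left _ _)
  have hJ4 : 4 ≤ J := le_max_right _ _
  have hK4 : 4 ≤ 4 / c := by rw [le_div_iff₀ hc]; linarith
  set L := (4 / c) ^ J with hL
  have hL100 : 100 ≤ L := by
    calc (100 : ℝ) ≤ 4 ^ 4 := by norm_num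
      _ ≤ (4 / c) ^ 4 := by gcongr
      _ ≤ L := pow_le_pow_right₀ (by linarith) hJ4
  have hL1 : 1 < L := by linarith
  have hlog : 0 < Real.log L := Real.log_pos hL1
  set N := ⌊L ^ Q / 4⌋₊ with hN
  refine ⟨max (Q / 2) (Q - Real.log 2 / Real.log L), L, N, ?_, ?_, hL100, ?_, ?_⟩
  · exact lt_max_of_lt_left (by positivity)
  · have := Real.log_pos (by norm_num : (1:ℝ) < 2)
    have : 0 < Real.log 2 / Real.log L := by positivity
    exact max_lt (by linarith) (by linarith)
  · have h1 : (N : ℝ) ≤ L ^ Q / 4 := Nat.floor_le (by positivity)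
    calc 2 * (N : ℝ) ≤ L ^ Q / 2 := by linarith
      _ = L ^ (Q - Real.log 2 / Real.log L) := by
          rw [Real.rpow_sub (by linarith)]
          congr 1
          rw [Real.rpow_def_of_pos (by linarith), mul_div_cancel₀ _ hlog.ne',
            Real.exp_log (by norm_num)]
      _ ≤ _ := Real.rpow_le_rpow_of_exponent_le hL1.le (le_max_right _ _)
  · rintro R hR ⟨a, b, hab⟩ y F hFy hFs
    have h1 := count_multi μ hC hc hc1 hμ Y hP J R hR ⟨a, a.2, b, b.2, hab⟩ y
      (F.map (Function.Embedding.subtype _))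
      (by intro z hz; simp at hz; exact hz.1)
      (by
        intro z hz
        rw [Finset.mem_map] at hz
        obtain ⟨z, hz, rfl⟩ := hz
        exact hFy z hz)
      (by
        intro z hz z' hz' hne
        rw [Finset.mem_map] at hz hz'
        obtain ⟨z, hz, rfl⟩ := hz
        obtain ⟨z', hz', rfl⟩ := hz'
        exact hFs z hz z' hz' (fun h => hne (by rw [h])))
    rw [Finset.card_map] at h1
    apply Nat.le_floor
    have hLQ : 0 < L ^ Q := by positivity
    have hF0 : (0 : ℝ) ≤ F.card := by positivity
    have h2 : 4 * B * (F.card : ℝ) ≤ B * L ^ Q := by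
      calc 4 * B * (F.card : ℝ) ≤ J * F.card := by gcongr
        _ ≤ _ := h1
    rw [le_div_iff₀ (by norm_num)]
    have h3 : B * (F.card * 4) ≤ B * L ^ Q := by linarith
    exact le_of_mul_le_mul_left h3 hB0

/-! ### The tree of nets and the mass distribution -/

lemma finite_of_card_le {A : Type*} (S : Set A) (N : ℕ)
    (h : ∀ F : Finset A, (F : Set A) ⊆ S → F.card ≤ N) : S.Finite ∧ S.ncard ≤ N := by
  have hfin : S.Finite := by
    by_contra hc
    obtain ⟨t, ht1, ht2⟩ := Set.Infinite.exists_subset_card_eq (s := S) hc (N + 1)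
    have := h t ht1
    omega
  refine ⟨hfin, ?_⟩
  rw [Set.ncard_eq_toFinset_card S hfin]
  exact h _ (by simp)

/-- The mass function on the tree. -/
noncomputable def treeMass {Z : Type*} (X : ℕ → Set Z) (π : ℕ → Z → Z) (p : ℝ) : ℕ → Z → ℝ
  | 0, _ => 1
  | k + 1, u =>
    (open Classical in
      if u = π (k + 1) (π k u) then
        1 - (({w | w ∈ X (k + 1) ∧ π k w = π k u} : Set Z).ncard - 1) * p else p) *
      treeMass X π p k (π k u)

/-- The properties of the tree. -/
structure NetTree (Z : Type*) [MetricSpace Z] (L R0 p : ℝ) where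
  X : ℕ → Set Z
  π : ℕ → Z → Z
  m : ℕ → Z → ℝ
  sep : ∀ k, ∀ a ∈ X k, ∀ b ∈ X k, a ≠ b → R0 / L ^ k ≤ dist a b
  π_mem : ∀ k z, π k z ∈ X k
  π_dist : ∀ k z, dist z (π k z) < R0 / L ^ k
  m_zero : ∀ z, m 0 z = 1
  m_pos : ∀ k, ∀ u ∈ X k, 0 < m k u
  m_child : ∀ k, ∀ u ∈ X (k + 1), p * m k (π k u) ≤ m (k + 1) u
  m_adj : ∀ k, ∀ u ∈ X k, ∀ u' ∈ X k, dist u u' ≤ 7 * (R0 / L ^ k) → p * m k u ≤ m k u'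
  m_sum : ∀ k, ∀ v : X k, ∑' u : {u : X (k + 1) // (⟨π k u, π_mem k u⟩ : X k) = v},
    ENNReal.ofReal (m (k + 1) u) = ENNReal.ofReal (m k v)

lemma exists_tree {Z : Type*} [MetricSpace Z] [Nonempty Z] {L R0 p : ℝ} {N : ℕ}
    (hL : 100 ≤ L) (hR0 : 0 < R0) (hp : 0 < p) (hpN : 2 * N * p ≤ 1) (hN : 1 ≤ N)
    (hcov : Cov Z L N) (hAdm : ∃ a b : Z, 8 * (4 * R0) ≤ dist a b) :
    Nonempty (NetTree Z L R0 p) := by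
  have hL0 : 0 < L := by linarith
  set s : ℕ → ℝ := fun k => R0 / L ^ k with hs
  have hs0 : ∀ k, 0 < s k := fun k => by positivity
  have hsucc : ∀ k, s (k + 1) = s k / L := fun k => by
    simp only [hs]; rw [pow_succ, div_div]
  have hsucc' : ∀ k, 100 * s (k + 1) ≤ s k := fun k => by
    rw [hsucc, mul_div_assoc', div_le_iff₀ hL0]
    have := hs0 k
    nlinarith
  have hsR : ∀ k, s k ≤ R0 := fun k => div_le_self hR0.le (one_le_pow₀ (by linarith))
  choose X hXs hXsep hXc using fun k => exists_net (Set.univ : Set Z) (s k) (hs0 k)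
  have hπ : ∀ k (z : Z), ∃ v ∈ X k, dist z v < s k ∧ ∀ v' ∈ X k, dist z v' < s k / 2 → v = v' := by
    intro k z
    by_cases h : ∃ v ∈ X k, dist z v < s k / 2
    · obtain ⟨v, hv, hd⟩ := h
      have := hs0 k
      refine ⟨v, hv, by linarith, ?_⟩
      intro v' hv' hd'
      by_contra hne
      have h1 := hXsep k v hv v' hv' hne
      have := dist_triangle_left v v' z
      linarith
    · obtain ⟨v, hv, hd⟩ := hXc k z (Set.mem_univ z)
      refine ⟨v, hv, hd, ?_⟩
      intro v' hv' hd'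
      exact absurd ⟨v', hv', hd'⟩ h
  choose π hπm hπd hπu using hπ
  set ch : ℕ → Z → Set Z := fun k v => {w | w ∈ X (k + 1) ∧ π k w = v} with hch
  have hchfin : ∀ k v, (ch k v).Finite ∧ (ch k v).ncard ≤ N := by
    intro k v
    apply finite_of_card_le
    intro F hF
    refine hcov (s k) (hs0 k) ?_ v F ?_ ?_
    · obtain ⟨a, b, hab⟩ := hAdm
      exact ⟨a, b, by have := hsR k; linarith⟩
    · intro a ha
      have h1 := hF ha
      have h2 := hπd k a
      rw [h1.2] at h2
      exact h2.le
    · intro a ha b hb hab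
      rw [← hsucc]
      exact hXsep _ a (hF ha).1 b (hF hb).1 hab
  have hcentral : ∀ k, ∀ v ∈ X k, π k (π (k + 1) v) = v := by
    intro k v hv
    apply hπu k _ v hv
    have := hπd (k + 1) v
    have := hsucc' k
    have := hs0 (k + 1)
    rw [dist_comm]; linarith
  set m := treeMass X π p with hm
  have hN1 : (1 : ℝ) ≤ N := by exact_mod_cast hN
  have hp1 : p ≤ 1 / 2 := by nlinarith
  -- recursion equations
  have hmc : ∀ k u, u = π (k + 1) (π k u) →
      m (k + 1) u = (1 - ((ch k (π k u)).ncard - 1) * p) * m k (π k u) := by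
    intro k u hu
    simp only [hm, treeMass]
    rw [if_pos hu]
  have hmn : ∀ k u, u ≠ π (k + 1) (π k u) → m (k + 1) u = p * m k (π k u) := by
    intro k u hu
    simp only [hm, treeMass]
    rw [if_neg hu]
  have hmpos : ∀ k u, u ∈ X k → 0 < m k u := by
    intro k
    induction k with
    | zero => intro u _; simp [hm, treeMass]
    | succ k ih =>
      intro u hu
      have h1 := ih (π k u) (hπm k u)
      by_cases h : u = π (k + 1) (π k u)
      · rw [hmc k u h]
        have h2 : ((ch k (π k u)).ncard : ℝ) ≤ N := by exact_mod_cast (hchfin k (π k u)).2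
        have : 0 < 1 - (((ch k (π k u)).ncard : ℝ) - 1) * p := by nlinarith
        positivity
      · rw [hmn k u h]; positivity
  have hmlow : ∀ k, ∀ u ∈ X (k + 1), p * m k (π k u) ≤ m (k + 1) u := by
    intro k u hu
    have h1 := hmpos k (π k u) (hπm k u)
    by_cases h : u = π (k + 1) (π k u)
    · rw [hmc k u h]
      have h2 : ((ch k (π k u)).ncard : ℝ) ≤ N := by exact_mod_cast (hchfin k (π k u)).2
      have : p ≤ 1 - (((ch k (π k u)).ncard : ℝ) - 1) * p := by nlinarith
      gcongr
    · rw [hmn k u h]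
  have hmup : ∀ k, ∀ u ∈ X (k + 1), m (k + 1) u ≤ m k (π k u) := by
    intro k u hu
    have h1 := hmpos k (π k u) (hπm k u)
    by_cases h : u = π (k + 1) (π k u)
    · rw [hmc k u h]
      have h2 : (1 : ℝ) ≤ ((ch k (π k u)).ncard : ℝ) := by
        have : 0 < (ch k (π k u)).ncard :=
          (Set.ncard_pos (hchfin k (π k u)).1).mpr ⟨u, hu, rfl⟩
        exact_mod_cast this
      have : 1 - (((ch k (π k u)).ncard : ℝ) - 1) * p ≤ 1 := by nlinarith
      nlinarith
    · rw [hmn k u h]; nlinarith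
  refine ⟨⟨X, π, m, hXsep, hπm, hπd, fun z => rfl, hmpos, hmlow, ?_, ?_⟩⟩
  · -- adjacency
    intro k
    induction k with
    | zero => intro u _ u' _ _; simp only [hm, treeMass]; linarith
    | succ k ih =>
      intro u hu u' hu' hd
      change dist u u' ≤ 7 * s (k + 1) at hd
      have hv := hπm k u
      have hv' := hπm k u'
      by_cases hvv : π k u = π k u'
      · calc p * m (k + 1) u ≤ p * m k (π k u) := by
              gcongr; exact hmup k u hu
          _ = p * m k (π k u') := by rw [hvv]
          _ ≤ _ := hmlow k u' hu'
      · have hss := hsucc' k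
        have hs1 := hs0 (k + 1)
        have hnc : ∀ a ∈ X (k + 1), ∀ b ∈ X (k + 1), dist a b ≤ 7 * s (k + 1) →
            a = π (k + 1) (π k a) → π k b = π k a := by
          intro a ha b hb hab hac
          apply hπu k b _ (hπm k a)
          have h1 := hπd (k + 1) (π k a)
          rw [← hac] at h1
          have h2 := dist_triangle b a (π k a)
          rw [dist_comm b a, dist_comm a (π k a)] at h2
          linarith
        have h1 : u ≠ π (k + 1) (π k u) := fun h => hvv (hnc u hu u' hu' hd h).symm
        have h2 : u' ≠ π (k + 1) (π k u') := fun h =>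
          hvv (hnc u' hu' u hu (by rw [dist_comm]; exact hd) h)
        rw [hmn k u h1, hmn k u' h2]
        have h3 := ih _ hv _ hv' (by
          have h4 := dist_triangle4 (π k u) u u' (π k u')
          have h5 := hπd k u
          have h6 := hπd k u'
          rw [dist_comm] at h5
          change _ ≤ 7 * s k
          linarith)
        gcongr
  · -- conservation
    intro k v
    classical
    have hfin := (hchfin k v).1
    haveI : Fintype {u : X (k + 1) // (⟨π k u, hπm k u⟩ : X k) = v} := by
      have : Finite {u : X (k + 1) // (⟨π k u, hπm k u⟩ : X k) = v} := by
        have := hfin.to_subtype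
        apply Finite.of_injective (β := ch k v)
          (fun u => ⟨u.1.1, u.1.2, congrArg Subtype.val u.2⟩)
        intro a b hab
        apply Subtype.ext
        apply Subtype.ext
        exact congrArg (fun q : ch k v => (q : Z)) hab
      exact Fintype.ofFinite _
    rw [tsum_fintype, ← ENNReal.ofReal_sum_of_nonneg (fun u _ => (hmpos _ _ u.1.2).le)]
    congr 1
    have e1 : ∑ u : {u : X (k + 1) // (⟨π k u, hπm k u⟩ : X k) = v}, m (k + 1) u.1.1 =
        ∑ u ∈ hfin.toFinset, m (k + 1) u := by
      refine Finset.sum_bij (fun u _ => u.1.1) ?_ ?_ ?_ ?_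
      · intro u _
        rw [Set.Finite.mem_toFinset]
        exact ⟨u.1.2, congrArg Subtype.val u.2⟩
      · intro a _ b _ hab
        exact Subtype.ext (Subtype.ext hab)
      · intro b hb
        rw [Set.Finite.mem_toFinset] at hb
        exact ⟨⟨⟨b, hb.1⟩, Subtype.ext hb.2⟩, Finset.mem_univ _, rfl⟩
      · intro _ _; rfl
    rw [e1]
    set c := π (k + 1) (v : Z) with hc
    have hcv : π k c = v := hcentral k v v.2
    have hcmem : c ∈ hfin.toFinset := by
      rw [Set.Finite.mem_toFinset]
      exact ⟨hπm _ _, hcv⟩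
    rw [← Finset.add_sum_erase _ _ hcmem]
    have e2 : ∑ u ∈ hfin.toFinset.erase c, m (k + 1) u =
        ∑ u ∈ hfin.toFinset.erase c, p * m k v := by
      apply Finset.sum_congr rfl
      intro u hu
      rw [Finset.mem_erase, Set.Finite.mem_toFinset] at hu
      have hu2 : π k u = v := hu.2.2
      rw [hmn k u (by rw [hu2]; exact hu.1), hu2]
    rw [e2, Finset.sum_const, nsmul_eq_mul, Finset.card_erase_of_mem hcmem,
      hmc k c (by rw [hcv]), hcv, ← Set.ncard_eq_toFinset_card _ hfin]
    have h2 : 1 ≤ (ch k v).ncard := (Set.ncard_pos hfin).mpr ⟨c, hπm _ _, hcv⟩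
    rw [Nat.cast_sub h2]
    push_cast
    ring

/-- Total level-`K` mass of a set. -/
noncomputable def NetTree.T {Z : Type*} [MetricSpace Z] {L R0 p : ℝ} (t : NetTree Z L R0 p) (K : ℕ)
    (B : Set Z) : ENNReal :=
  ∑' u : t.X K, B.indicator (fun z => ENNReal.ofReal (t.m K z)) u

lemma NetTree.T_fiber {Z : Type*} [MetricSpace Z] {L R0 p : ℝ} (t : NetTree Z L R0 p) (K : ℕ)
    (B : Set Z) : t.T (K + 1) B = ∑' v : t.X K,
      ∑' u : {u : t.X (K + 1) // (⟨t.π K u, t.π_mem K u⟩ : t.X K) = v},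
        B.indicator (fun z => ENNReal.ofReal (t.m (K + 1) z)) u := by
  unfold NetTree.T
  rw [← (Equiv.sigmaFiberEquiv
    (fun u : t.X (K + 1) => (⟨t.π K u, t.π_mem K u⟩ : t.X K))).tsum_eq, ← ENNReal.tsum_sigma]
  rfl

lemma NetTree.T_up {Z : Type*} [MetricSpace Z] {L R0 p : ℝ} (t : NetTree Z L R0 p) (K : ℕ)
    (B B' : Set Z) (h : ∀ u ∈ t.X (K + 1), u ∈ B → t.π K u ∈ B') :
    t.T (K + 1) B ≤ t.T K B' := by
  rw [t.T_fiber]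
  apply ENNReal.tsum_le_tsum
  intro v
  by_cases hv : (v : Z) ∈ B'
  · rw [Set.indicator_of_mem hv, ← t.m_sum K v]
    apply ENNReal.tsum_le_tsum
    intro u
    exact Set.indicator_le_self' (fun _ _ => zero_le) _
  · rw [Set.indicator_of_notMem hv]
    apply le_of_eq
    rw [ENNReal.tsum_eq_zero]
    intro u
    apply Set.indicator_of_notMem
    intro hu
    have := h u u.1.2 hu
    have h2 : t.π K u.1 = (v : Z) := congrArg Subtype.val u.2
    rw [h2] at this
    exact hv this

lemma NetTree.T_down {Z : Type*} [MetricSpace Z] {L R0 p : ℝ} (t : NetTree Z L R0 p) (K : ℕ)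
    (B B' : Set Z) (h : ∀ u ∈ t.X (K + 1), t.π K u ∈ B → u ∈ B') :
    t.T K B ≤ t.T (K + 1) B' := by
  rw [t.T_fiber]
  apply ENNReal.tsum_le_tsum
  intro v
  by_cases hv : (v : Z) ∈ B
  · rw [Set.indicator_of_mem hv, ← t.m_sum K v]
    apply ENNReal.tsum_le_tsum
    intro u
    rw [Set.indicator_of_mem]
    apply h u u.1.2
    have h2 : t.π K u.1 = (v : Z) := congrArg Subtype.val u.2
    rw [h2]
    exact hv
  · rw [Set.indicator_of_notMem hv]
    exact zero_le

lemma NetTree.T_mono {Z : Type*} [MetricSpace Z] {L R0 p : ℝ} (t : NetTree Z L R0 p) (K : ℕ)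
    {B B' : Set Z} (h : B ⊆ B') : t.T K B ≤ t.T K B' := by
  apply ENNReal.tsum_le_tsum
  intro v
  exact Set.indicator_le_indicator_of_subset h (fun _ => zero_le) _

lemma scale_step {L R0 : ℝ} (hL : 100 ≤ L) (hR0 : 0 < R0) (k : ℕ) :
    100 * (R0 / L ^ (k + 1)) ≤ R0 / L ^ k := by
  have hL0 : 0 < L := by linarith
  rw [pow_succ, ← div_div, mul_div_assoc', div_le_iff₀ hL0]
  have : 0 < R0 / L ^ k := by positivity
  nlinarith

lemma NetTree.T_up_iter {Z : Type*} [MetricSpace Z] {L R0 p : ℝ} (t : NetTree Z L R0 p)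
    (hL : 100 ≤ L) (hR0 : 0 < R0) (x : Z) (R : ℝ) (j n : ℕ) :
    t.T (j + n) (Metric.ball x R) ≤
      t.T j (Metric.ball x (R + 2 * (R0 / L ^ j - R0 / L ^ (j + n)))) := by
  have hL0 : 0 < L := by linarith
  induction n generalizing R with
  | zero => simp
  | succ n ih =>
    refine (t.T_up (j + n) _ (Metric.ball x (R + R0 / L ^ (j + n))) ?_).trans ((ih _).trans ?_)
    · intro u _ hu
      rw [Metric.mem_ball] at hu ⊢
      have h1 := t.π_dist (j + n) u
      have h2 := dist_triangle_left (t.π (j + n) u) x u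
      linarith
    · apply t.T_mono
      apply Metric.ball_subset_ball
      have := scale_step hL hR0 (j + n)
      have h0 : 0 < R0 / L ^ (j + n + 1) := by positivity
      rw [← add_assoc]
      linarith

lemma NetTree.T_down_iter {Z : Type*} [MetricSpace Z] {L R0 p : ℝ} (t : NetTree Z L R0 p)
    (hL : 100 ≤ L) (hR0 : 0 < R0) (k n : ℕ) (v : Z) (hv : v ∈ t.X k) :
    ENNReal.ofReal (t.m k v) ≤
      t.T (k + n) (Metric.closedBall v (2 * (R0 / L ^ k - R0 / L ^ (k + n)))) := by
  have hL0 : 0 < L := by linarith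
  induction n with
  | zero =>
    unfold NetTree.T
    refine le_trans ?_ (ENNReal.le_tsum (⟨v, hv⟩ : t.X k))
    rw [Set.indicator_of_mem (by simp)]
    exact le_rfl
  | succ n ih =>
    refine ih.trans (t.T_down (k + n) _ _ ?_)
    intro u _ hu
    rw [Metric.mem_closedBall] at hu ⊢
    have h1 := t.π_dist (k + n) u
    have h2 := dist_triangle u (t.π (k + n) u) v
    have := scale_step hL hR0 (k + n)
    have h0 : 0 < R0 / L ^ (k + n + 1) := by positivity
    rw [← add_assoc]
    linarith

lemma NetTree.ancestor {Z : Type*} [MetricSpace Z] {L R0 p : ℝ} (t : NetTree Z L R0 p)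
    (hL : 100 ≤ L) (hR0 : 0 < R0) (hp : 0 < p) (j n : ℕ) (v : Z) (hv : v ∈ t.X (j + n)) :
    ∃ a ∈ t.X j, dist v a ≤ 2 * (R0 / L ^ j - R0 / L ^ (j + n)) ∧
      p ^ n * t.m j a ≤ t.m (j + n) v := by
  have hL0 : 0 < L := by linarith
  induction n generalizing v with
  | zero => exact ⟨v, hv, by simp, by simp⟩
  | succ n ih =>
    obtain ⟨a, ha, h1, h2⟩ := ih (t.π (j + n) v) (t.π_mem _ _)
    refine ⟨a, ha, ?_, ?_⟩
    · have h3 := t.π_dist (j + n) v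
      have h4 := dist_triangle v (t.π (j + n) v) a
      have := scale_step hL hR0 (j + n)
      have h0 : 0 < R0 / L ^ (j + n + 1) := by positivity
      rw [← add_assoc]
      linarith
    · calc p ^ (n + 1) * t.m j a = p * (p ^ n * t.m j a) := by ring
        _ ≤ p * t.m (j + n) (t.π (j + n) v) := by gcongr
        _ ≤ _ := t.m_child (j + n) v hv

lemma NetTree.T_bound {Z : Type*} [MetricSpace Z] {L R0 p : ℝ} {N : ℕ} (t : NetTree Z L R0 p)
    (hL : 100 ≤ L) (hR0 : 0 < R0) (hcov : Cov Z L N)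
    (hAdm : ∃ a b : Z, 8 * (4 * R0) ≤ dist a b) (j : ℕ) (x : Z) (M : ENNReal)
    (hM : ∀ v ∈ t.X j, dist v x < 3 * (R0 / L ^ j) → ENNReal.ofReal (t.m j v) ≤ M) :
    t.T j (Metric.ball x (3 * (R0 / L ^ j))) ≤ N * M := by
  classical
  have hL0 : 0 < L := by linarith
  unfold NetTree.T
  rw [ENNReal.tsum_eq_iSup_sum]
  apply iSup_le
  intro s
  set B := Metric.ball x (3 * (R0 / L ^ j)) with hB
  have hj : 0 < R0 / L ^ j := by positivity
  have hcard : (s.filter (fun u : t.X j => (u : Z) ∈ B)).card ≤ N := by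
    rw [← Finset.card_map (Function.Embedding.subtype _)]
    obtain ⟨a, b, hab⟩ := hAdm
    have hle : R0 / L ^ j ≤ R0 := div_le_self hR0.le (one_le_pow₀ (by linarith))
    refine hcov (4 * (R0 / L ^ j)) (by positivity) ⟨a, b, by linarith⟩ x _ ?_ ?_
    · intro z hz
      rw [Finset.mem_map] at hz
      obtain ⟨u, hu, rfl⟩ := hz
      have h1 := (Finset.mem_filter.mp hu).2
      rw [hB, Metric.mem_ball] at h1
      change dist (u : Z) x ≤ _
      linarith
    · intro z hz z' hz' hne
      rw [Finset.mem_map] at hz hz'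
      obtain ⟨u, hu, rfl⟩ := hz
      obtain ⟨u', hu', rfl⟩ := hz'
      refine le_trans ?_ (t.sep j u u.2 u' u'.2 hne)
      rw [div_le_iff₀ hL0]
      nlinarith
  calc ∑ a ∈ s, B.indicator (fun z => ENNReal.ofReal (t.m j z)) (a : Z)
      = ∑ a ∈ s.filter (fun u : t.X j => (u : Z) ∈ B), ENNReal.ofReal (t.m j a) := by
        rw [Finset.sum_filter]
        apply Finset.sum_congr rfl
        intro a _
        rw [Set.indicator_apply]
    _ ≤ ∑ a ∈ s.filter (fun u : t.X j => (u : Z) ∈ B), M := by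
        apply Finset.sum_le_sum
        intro a ha
        exact hM a a.2 (Metric.mem_ball.mp (Finset.mem_filter.mp ha).2)
    _ = (s.filter (fun u : t.X j => (u : Z) ∈ B)).card * M := by
        rw [Finset.sum_const, nsmul_eq_mul]
    _ ≤ N * M := by gcongr

open MeasureTheory in
/-- The level `K` measure of the tree. -/
noncomputable def NetTree.meas {Z : Type*} [MetricSpace Z] [MeasurableSpace Z] {L R0 p : ℝ}
    (t : NetTree Z L R0 p) (K : ℕ) : Measure Z :=
  Measure.sum (fun u : t.X K => ENNReal.ofReal (t.m K u) • Measure.dirac (u : Z))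

open MeasureTheory in
lemma NetTree.meas_apply {Z : Type*} [MetricSpace Z] [MeasurableSpace Z] {L R0 p : ℝ}
    (t : NetTree Z L R0 p) (K : ℕ) (B : Set Z) (hB : MeasurableSet B) :
    t.meas K B = t.T K B := by
  unfold NetTree.meas NetTree.T
  rw [Measure.sum_apply _ hB]
  apply tsum_congr
  intro u
  rw [Measure.smul_apply, Measure.dirac_apply' _ hB, smul_eq_mul]
  by_cases h : (u : Z) ∈ B
  · rw [Set.indicator_of_mem h, Set.indicator_of_mem h]; simp
  · rw [Set.indicator_of_notMem h, Set.indicator_of_notMem h]; simp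

lemma NetTree.lower {Z : Type*} [MetricSpace Z] {L R0 p : ℝ} (t : NetTree Z L R0 p)
    (hL : 100 ≤ L) (hR0 : 0 < R0) (k K : ℕ) (hkK : k ≤ K) (x : Z) (r : ℝ)
    (hr : 3 * (R0 / L ^ k) ≤ r) :
    ENNReal.ofReal (t.m k (t.π k x)) ≤ t.T K (Metric.ball x r) := by
  have hL0 : 0 < L := by linarith
  obtain ⟨n, rfl⟩ := Nat.exists_eq_add_of_le hkK
  refine (t.T_down_iter hL hR0 k n _ (t.π_mem k x)).trans (t.T_mono _ ?_)
  intro z hz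
  rw [Metric.mem_closedBall] at hz
  rw [Metric.mem_ball]
  have h1 := t.π_dist k x
  have h2 := dist_triangle_right z x (t.π k x)
  have h0 : 0 < R0 / L ^ (k + n) := by positivity
  linarith

lemma NetTree.upper {Z : Type*} [MetricSpace Z] {L R0 p : ℝ} {N : ℕ} (t : NetTree Z L R0 p)
    (hL : 100 ≤ L) (hR0 : 0 < R0) (hcov : Cov Z L N)
    (hAdm : ∃ a b : Z, 8 * (4 * R0) ≤ dist a b) (j K : ℕ) (hj : j ≤ K) (x : Z) (R : ℝ)
    (hR : R ≤ R0 / L ^ j) (M : ENNReal)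
    (hM : ∀ v ∈ t.X j, dist v x < 3 * (R0 / L ^ j) → ENNReal.ofReal (t.m j v) ≤ M) :
    t.T K (Metric.ball x R) ≤ N * M := by
  have hL0 : 0 < L := by linarith
  obtain ⟨n, rfl⟩ := Nat.exists_eq_add_of_le hj
  refine (t.T_up_iter hL hR0 x R j n).trans (le_trans (t.T_mono _ ?_)
    (t.T_bound hL hR0 hcov hAdm j x M hM))
  apply Metric.ball_subset_ball
  have h0 : 0 < R0 / L ^ (j + n) := by positivity
  linarith

open MeasureTheory in
lemma discrete_meas {Z : Type*} [MetricSpace Z] [Nonempty Z] [MeasurableSpace Z] [BorelSpace Z]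
    {L β : ℝ} {N : ℕ} (hL : 100 ≤ L) (hβ : 0 < β) (hNL : 2 * (N : ℝ) ≤ L ^ β)
    (hcov : Cov Z L N) :
    ∃ C : ℝ, 1 ≤ C ∧ ∀ r0 R0 : ℝ, 0 < r0 → r0 ≤ R0 → (∃ a b : Z, 8 * (4 * R0) ≤ dist a b) →
      ∃ ν : Measure Z,
        (∀ x x' : Z, ∀ r R : ℝ, r0 ≤ r → r ≤ R → R ≤ R0 → dist x x' ≤ R →
          ν (Metric.ball x R) ≤ ENNReal.ofReal (C * (R / r) ^ β) * ν (Metric.ball x' r)) ∧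
        ∀ x, ν (Metric.ball x R0) ≤ ENNReal.ofReal C ∧
          1 ≤ ENNReal.ofReal C * ν (Metric.ball x R0) := by
  have hL0 : 0 < L := by linarith
  have hL1 : 1 ≤ L := by linarith
  have hLb : 1 ≤ L ^ β := Real.one_le_rpow hL1 hβ.le
  have hLb0 : 0 < L ^ β := by linarith
  have h4L : 1 ≤ (4 * L ^ 2) ^ β := Real.one_le_rpow (by nlinarith) hβ.le
  have hNn : (0 : ℝ) ≤ N := Nat.cast_nonneg N
  set C : ℝ := (N + 1) * L ^ β * (4 * L ^ 2) ^ β with hC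
  have hC2 : (N + 1) * L ^ β ≤ C := le_mul_of_one_le_right (by positivity) h4L
  have hCL : L ^ β ≤ C := by nlinarith
  have hCN : (N : ℝ) ≤ C := by nlinarith
  refine ⟨C, hLb.trans hCL, ?_⟩
  intro r0 R0 hr0 hrR0 hAdm
  have hR0 : 0 < R0 := by linarith
  set p : ℝ := (L ^ β)⁻¹ with hp
  have hp0 : 0 < p := by positivity
  have hN1 : 1 ≤ N := by
    obtain ⟨x⟩ := ‹Nonempty Z›
    obtain ⟨a, b, hab⟩ := hAdm
    have := hcov R0 hR0 ⟨a, b, by linarith⟩ x {x} (by simp [hR0.le]) (by simp)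
    simpa using this
  obtain ⟨t⟩ := exists_tree (p := p) hL hR0 hp0
    (by rw [hp, ← div_eq_mul_inv, div_le_one hLb0]; exact hNL) hN1 hcov hAdm
  have hsmall : ∀ ε : ℝ, 0 < ε → ∃ k : ℕ, R0 / L ^ k < ε := by
    intro ε hε
    obtain ⟨k, hk⟩ := pow_unbounded_of_one_lt (R0 / ε) (show 1 < L by linarith)
    refine ⟨k, ?_⟩
    rw [div_lt_iff₀ hε] at hk
    rw [div_lt_iff₀ (by positivity)]
    linarith
  obtain ⟨K, hK⟩ := hsmall (r0 / 4) (by linarith)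
  have hK1 : 1 ≤ K := by
    rcases Nat.eq_zero_or_pos K with h | h
    · subst h; simp at hK; linarith
    · exact h
  have hsu : ∀ k, R0 / L ^ (k + 1) = (R0 / L ^ k) / L := fun k => by rw [pow_succ, div_div]
  have hs0 : ∀ k, 0 < R0 / L ^ k := fun k => by positivity
  refine ⟨t.meas K, ?_, ?_⟩
  · intro x x' r R hr hrR hRR0 hxx
    rw [t.meas_apply K _ Metric.isOpen_ball.measurableSet,
      t.meas_apply K _ Metric.isOpen_ball.measurableSet]
    have hr' : 0 < r := by linarith
    have hR' : 0 < R := by linarith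
    -- choice of k
    have hexk : ∃ k, R0 / L ^ k < r / 4 := hsmall _ (by linarith)
    classical
    obtain ⟨k, hk1, hkK, hk2⟩ : ∃ k, R0 / L ^ k < r / 4 ∧ k ≤ K ∧ r / 4 ≤ L * (R0 / L ^ k) := by
      have h1 := Nat.find_spec hexk
      have h2 : Nat.find hexk ≤ K := Nat.find_min' hexk (by linarith)
      have h3 : Nat.find hexk ≠ 0 := by
        intro h; rw [h] at h1; simp at h1; linarith
      obtain ⟨q, hq⟩ := Nat.exists_eq_succ_of_ne_zero h3
      refine ⟨_, h1, h2, ?_⟩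
      have h4 := Nat.find_min hexk (m := q) (by omega)
      rw [hq, Nat.succ_eq_add_one, hsu, mul_div_cancel₀ _ hL0.ne']
      linarith
    have hexj : ∃ k, R0 / L ^ k < R := hsmall _ (by linarith)
    obtain ⟨j, hj1, hjk, hj2⟩ : ∃ j, R ≤ R0 / L ^ j ∧ j ≤ k ∧ R0 / L ^ j ≤ L * R := by
      have h1 := Nat.find_spec hexj
      have h2 : Nat.find hexj ≤ k := Nat.find_min' hexj (by linarith)
      have h3 : Nat.find hexj ≠ 0 := by
        intro h; rw [h] at h1; simp at h1; linarith
      obtain ⟨q, hq⟩ := Nat.exists_eq_succ_of_ne_zero h3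
      have h4 := Nat.find_min hexj (m := q) (by omega)
      refine ⟨q, by linarith, by omega, ?_⟩
      rw [hq, Nat.succ_eq_add_one, hsu, div_lt_iff₀ hL0] at h1
      linarith
    have hlow := t.lower hL hR0 k K hkK x' r (by linarith)
    obtain ⟨n, rfl⟩ := Nat.exists_eq_add_of_le hjk
    obtain ⟨a, ha, ha1, ha2⟩ := t.ancestor hL hR0 hp0 j n (t.π (j + n) x') (t.π_mem _ _)
    have hup := t.upper hL hR0 hcov hAdm j K (hjk.trans hkK) x R hj1
      (ENNReal.ofReal (p⁻¹ * t.m j a)) (by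
        intro v hv hvx
        apply ENNReal.ofReal_le_ofReal
        have h1 := t.m_adj j v hv a ha (by
          have h1 := dist_triangle4 v x x' (t.π (j + n) x')
          have h2 := dist_triangle v (t.π (j + n) x') a
          have h3 := t.π_dist (j + n) x'
          have h4 := hs0 (j + n)
          have h5 := hs0 j
          linarith)
        rw [inv_mul_eq_div, le_div_iff₀ hp0]
        linarith)
    refine hup.trans ?_
    have hma := t.m_pos j a ha
    have hLn : L ^ n ≤ 4 * L ^ 2 * (R / r) := by
      have e : R0 / L ^ (j + n) * L ^ n = R0 / L ^ j := by
        rw [pow_add]; field_simp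
      rw [mul_div_assoc', le_div_iff₀ hr']
      have h1 := hs0 (j + n)
      have h2 : r * L ^ n ≤ 4 * L * (R0 / L ^ (j + n)) * L ^ n := by gcongr; linarith
      have h3 : 4 * L * (R0 / L ^ (j + n)) * L ^ n = 4 * L * (R0 / L ^ j) := by
        rw [mul_assoc, e]
      have h4 : 4 * L * (R0 / L ^ j) ≤ 4 * L * (L * R) := by gcongr
      nlinarith
    have hpn : (p ^ n)⁻¹ ≤ (4 * L ^ 2) ^ β * (R / r) ^ β := by
      rw [← Real.mul_rpow (by positivity) (by positivity), hp, inv_pow, inv_inv,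
        ← Real.rpow_natCast, ← Real.rpow_mul hL0.le, mul_comm β, Real.rpow_mul hL0.le,
        Real.rpow_natCast]
      exact Real.rpow_le_rpow (by positivity) hLn hβ.le
    have hRr : 0 < (R / r) ^ β := by positivity
    calc (N : ENNReal) * ENNReal.ofReal (p⁻¹ * t.m j a)
        = ENNReal.ofReal (N * (p⁻¹ * t.m j a)) := by
          rw [ENNReal.ofReal_mul hNn, ENNReal.ofReal_natCast]
      _ ≤ ENNReal.ofReal (C * (R / r) ^ β * t.m (j + n) (t.π (j + n) x')) := by
          apply ENNReal.ofReal_le_ofReal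
          have h1 : t.m j a ≤ (p ^ n)⁻¹ * t.m (j + n) (t.π (j + n) x') := by
            rw [inv_mul_eq_div, le_div_iff₀ (by positivity)]
            linarith
          have h2 : 0 < t.m (j + n) (t.π (j + n) x') := t.m_pos _ _ (t.π_mem _ _)
          have h3 : p⁻¹ = L ^ β := by rw [hp, inv_inv]
          calc N * (p⁻¹ * t.m j a)
              ≤ N * (p⁻¹ * (((4 * L ^ 2) ^ β * (R / r) ^ β) *
                  t.m (j + n) (t.π (j + n) x'))) := by
                gcongr
                exact h1.trans (by gcongr)
            _ = N * (L ^ β * (4 * L ^ 2) ^ β * (R / r) ^ β *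
                  t.m (j + n) (t.π (j + n) x')) := by rw [h3]; ring
            _ ≤ (N + 1) * (L ^ β * (4 * L ^ 2) ^ β * (R / r) ^ β *
                  t.m (j + n) (t.π (j + n) x')) := by
                gcongr; linarith
            _ = _ := by rw [hC]; ring
      _ = ENNReal.ofReal (C * (R / r) ^ β) * ENNReal.ofReal (t.m (j + n) (t.π (j + n) x')) :=
          ENNReal.ofReal_mul (by positivity)
      _ ≤ _ := by gcongr
  · intro x
    rw [t.meas_apply K _ Metric.isOpen_ball.measurableSet]
    constructor
    · have hup := t.upper hL hR0 hcov hAdm 0 K (by omega) x R0 (by simp) 1 (by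
        intro v _ _
        rw [t.m_zero]; simp)
      refine hup.trans ?_
      rw [mul_one, ← ENNReal.ofReal_natCast]
      exact ENNReal.ofReal_le_ofReal hCN
    · have hlow := t.lower hL hR0 1 K hK1 x R0 (by
        have := scale_step hL hR0 0
        have := hs0 1
        simp at *
        linarith)
      have h1 := t.m_child 0 (t.π 1 x) (t.π_mem 1 x)
      rw [t.m_zero, mul_one] at h1
      calc (1 : ENNReal) ≤ ENNReal.ofReal (C * p) := by
            rw [ENNReal.one_le_ofReal, hp, ← div_eq_mul_inv, one_le_div hLb0]
            exact hCL
        _ = ENNReal.ofReal C * ENNReal.ofReal p := ENNReal.ofReal_mul (by positivity)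
        _ ≤ _ := by
          gcongr
          exact (ENNReal.ofReal_le_ofReal h1).trans hlow

/-! ### Compactness of balls -/

lemma cov_cover {Z : Type*} [MetricSpace Z] {L : ℝ} {N : ℕ} (hL : 100 ≤ L) (hcov : Cov Z L N)
    (R : ℝ) (hR : 0 < R) (hAdm : ∃ a b : Z, 8 * R ≤ dist a b) (y : Z) :
    ∃ t : Set Z, t.Finite ∧ Metric.closedBall y R ⊆ ⋃ z ∈ t, Metric.closedBall z (R / L) := by
  have hL0 : 0 < L := by linarith
  obtain ⟨t, ht1, ht2, ht3⟩ := exists_net (Metric.closedBall y R) (R / L) (by positivity)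
  refine ⟨t, (finite_of_card_le t N ?_).1, ?_⟩
  · intro F hF
    exact hcov R hR hAdm y F (fun a ha => Metric.mem_closedBall.mp (ht1 (hF ha)))
      (fun a ha b hb hab => ht2 a (hF ha) b (hF hb) hab)
  · intro z hz
    obtain ⟨u, hu, hd⟩ := ht3 z hz
    exact Set.mem_biUnion hu (Metric.mem_closedBall.mpr hd.le)

lemma cov_cover_iter {Z : Type*} [MetricSpace Z] {L : ℝ} {N : ℕ} (hL : 100 ≤ L)
    (hcov : Cov Z L N)
    (R : ℝ) (hR : 0 < R) (hAdm : ∃ a b : Z, 8 * R ≤ dist a b) (y : Z) (n : ℕ) :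
    ∃ t : Set Z, t.Finite ∧ Metric.closedBall y R ⊆ ⋃ z ∈ t, Metric.closedBall z (R / L ^ n) := by
  have hL0 : 0 < L := by linarith
  induction n with
  | zero => exact ⟨{y}, Set.finite_singleton y, by simp⟩
  | succ n ih =>
    obtain ⟨t, ht, hc⟩ := ih
    have hRn : R / L ^ n ≤ R := div_le_self hR.le (one_le_pow₀ (by linarith))
    choose g hg1 hg2 using fun z : Z => cov_cover hL hcov (R / L ^ n) (by positivity)
      (by obtain ⟨a, b, hab⟩ := hAdm; exact ⟨a, b, by linarith⟩) z
    refine ⟨⋃ z ∈ t, g z, ht.biUnion (fun z _ => hg1 z), ?_⟩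
    intro w hw
    obtain ⟨z, hz, hwz⟩ := Set.mem_iUnion₂.mp (hc hw)
    obtain ⟨v, hv, hwv⟩ := Set.mem_iUnion₂.mp (hg2 z hwz)
    rw [div_div, ← pow_succ] at hwv
    exact Set.mem_biUnion (Set.mem_biUnion hz hv) hwv

lemma cov_compact {Z : Type*} [MetricSpace Z] [CompleteSpace Z] {L : ℝ} {N : ℕ} (hL : 100 ≤ L)
    (hcov : Cov Z L N)
    (R : ℝ) (hAdm : ∃ a b : Z, 8 * R ≤ dist a b) (y : Z) :
    IsCompact (Metric.closedBall y R) := by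
  have hL0 : 0 < L := by linarith
  rcases lt_or_ge 0 R with hR | hR
  · apply TotallyBounded.isCompact_of_isClosed _ Metric.isClosed_closedBall
    rw [Metric.totallyBounded_iff]
    intro ε hε
    obtain ⟨k, hk⟩ := pow_unbounded_of_one_lt (R / ε) (show 1 < L by linarith)
    obtain ⟨t, ht, hc⟩ := cov_cover_iter hL hcov R hR hAdm y k
    refine ⟨t, ht, hc.trans ?_⟩
    apply Set.iUnion₂_mono
    intro z _
    apply Metric.closedBall_subset_ball
    rw [div_lt_iff₀ hε] at hk
    rw [div_lt_iff₀ (by positivity)]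
    linarith
  · apply Set.Subsingleton.isCompact
    intro a ha b hb
    rw [Metric.mem_closedBall] at ha hb
    have h1 : dist a y = 0 := le_antisymm (ha.trans hR) dist_nonneg
    have h2 : dist b y = 0 := le_antisymm (hb.trans hR) dist_nonneg
    rw [dist_eq_zero] at h1 h2
    rw [h1, h2]

lemma cov_locallyCompact {Z : Type*} [MetricSpace Z] [CompleteSpace Z] {L : ℝ} {N : ℕ}
    (hL : 100 ≤ L) (hcov : Cov Z L N) (a b : Z) (hab : a ≠ b) : LocallyCompactSpace Z := by
  have h0 : 0 < dist a b := dist_pos.mpr hab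
  haveI : WeaklyLocallyCompactSpace Z := by
    constructor
    intro x
    refine ⟨Metric.closedBall x (dist a b / 8), ?_, Metric.closedBall_mem_nhds x (by positivity)⟩
    exact cov_compact hL hcov _ ⟨a, b, by linarith⟩ x
  infer_instance

/-! ### Limits of measures along an ultrafilter -/

open MeasureTheory CompactlySupported Topology in
lemma exists_limit_meas {Z : Type*} [MetricSpace Z] [LocallyCompactSpace Z] [MeasurableSpace Z]
    [BorelSpace Z] (U : Ultrafilter ℕ) (ν : ℕ → Measure Z)
    (hfin : ∀ x : Z, ∃ δ : ℝ, 0 < δ ∧ ∃ M : ENNReal, M ≠ ⊤ ∧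
      ∀ᶠ n in (U : Filter ℕ), ν n (Metric.ball x δ) ≤ M) :
    ∃ μ : Measure Z, ∀ x : Z, ∀ r : ℝ, 0 < r → IsCompact (Metric.closedBall x (2 * r)) →
      (∀ a : ENNReal, (∀ᶠ n in (U : Filter ℕ), a ≤ ν n (Metric.ball x r)) →
        a ≤ μ (Metric.ball x (2 * r))) ∧
      (∀ a : ENNReal, (∀ᶠ n in (U : Filter ℕ), ν n (Metric.ball x (2 * r)) ≤ a) →
        μ (Metric.ball x r) ≤ a) := by
  have hlim : ∀ f : C_c(Z, ℝ≥0), ∃ l : ENNReal,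
      Filter.Tendsto (fun n => ∫⁻ z, (f z : ENNReal) ∂(ν n)) U (𝓝 l) := by
    intro f
    exact ⟨_, (U.map (fun n => ∫⁻ z, (f z : ENNReal) ∂(ν n))).le_nhds_lim⟩
  choose l hl using hlim
  have hcpt : ∀ K : Set Z, IsCompact K → ∃ M : ENNReal, M ≠ ⊤ ∧
      ∀ᶠ n in (U : Filter ℕ), ν n K ≤ M := by
    intro K hK
    choose δ hδ M hM hν using hfin
    obtain ⟨t, ht⟩ := hK.elim_nhds_subcover (fun x => Metric.ball x (δ x))
      (fun x _ => Metric.ball_mem_nhds x (hδ x))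
    refine ⟨∑ x ∈ t, M x, ENNReal.sum_ne_top.mpr (fun x _ => hM x), ?_⟩
    have h1 : ∀ᶠ n in (U : Filter ℕ), ∀ x ∈ t, ν n (Metric.ball x (δ x)) ≤ M x := by
      rw [Filter.eventually_all_finset]
      intro x _
      exact hν x
    filter_upwards [h1] with n hn
    calc ν n K ≤ ν n (⋃ x ∈ t, Metric.ball x (δ x)) := measure_mono ht.2
      _ ≤ ∑ x ∈ t, ν n (Metric.ball x (δ x)) := measure_biUnion_finset_le _ _
      _ ≤ _ := Finset.sum_le_sum hn
  have hlt : ∀ f, l f ≠ ⊤ := by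
    intro f
    obtain ⟨M, hM, hν⟩ := hcpt (tsupport f) f.hasCompactSupport
    obtain ⟨c, hc⟩ : ∃ c : ℝ≥0, ∀ z, f z ≤ c := by
      obtain ⟨c, hc⟩ := (f.hasCompactSupport.isCompact_range f.continuous).bddAbove
      exact ⟨c, fun z => hc ⟨z, rfl⟩⟩
    have h1 : ∀ᶠ n in (U : Filter ℕ), ∫⁻ z, (f z : ENNReal) ∂(ν n) ≤ c * M := by
      filter_upwards [hν] with n hn
      calc ∫⁻ z, (f z : ENNReal) ∂(ν n)
          ≤ ∫⁻ z, (tsupport f).indicator (fun _ => (c : ENNReal)) z ∂(ν n) := by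
            apply lintegral_mono
            intro z
            by_cases hz : z ∈ tsupport f
            · simp only [Set.indicator_of_mem hz]
              exact_mod_cast hc z
            · simp only [image_eq_zero_of_notMem_tsupport hz]
              simp
        _ ≤ c * ν n (tsupport f) := lintegral_indicator_const_le _ _
        _ ≤ _ := by gcongr
    have h2 : l f ≤ c * M := le_of_tendsto (hl f) h1
    exact ne_top_of_le_ne_top (ENNReal.mul_ne_top ENNReal.coe_ne_top hM) h2
  let Λ : C_c(Z, ℝ≥0) →ₗ[ℝ≥0] ℝ≥0 :=
    { toFun := fun f => (l f).toNNReal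
      map_add' := by
        intro f g
        rw [← ENNReal.toNNReal_add (hlt f) (hlt g)]
        congr 1
        refine tendsto_nhds_unique (hl (f + g)) ?_
        refine ((hl f).add (hl g)).congr ?_
        intro n
        rw [← lintegral_add_left (by have := f.continuous.measurable; fun_prop)]
        simp
      map_smul' := by
        intro c f
        have : l (c • f) = c * l f := by
          refine tendsto_nhds_unique (hl (c • f)) ?_
          refine (ENNReal.Tendsto.const_mul (hl f) (Or.inr ENNReal.coe_ne_top)).congr ?_
          intro n
          rw [← lintegral_const_mul _ (by have := f.continuous.measurable; fun_prop)]
          simp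
        rw [this]
        simp }
  have hΛ : ∀ f : C_c(Z, ℝ≥0), ∫⁻ z, (f z : ENNReal) ∂(NNRealRMK.rieszMeasure Λ) = l f := by
    intro f
    rw [NNRealRMK.lintegral_rieszMeasure]
    exact ENNReal.coe_toNNReal (hlt f)
  refine ⟨NNRealRMK.rieszMeasure Λ, ?_⟩
  intro x r hr hK
  have hcont : Continuous (fun z : Z => Real.toNNReal (min 1 (3 - 2 * dist z x / r))) := by
    fun_prop
  have hzero : ∀ z : Z, z ∉ Metric.closedBall x (3 / 2 * r) →
      Real.toNNReal (min 1 (3 - 2 * dist z x / r)) = 0 := by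
    intro z hz
    rw [Metric.mem_closedBall, not_le] at hz
    rw [Real.toNNReal_eq_zero]
    apply (min_le_right _ _).trans
    rw [sub_nonpos, le_div_iff₀ hr]
    linarith
  have hK' : IsCompact (Metric.closedBall x (3 / 2 * r)) :=
    hK.of_isClosed_subset Metric.isClosed_closedBall
      (Metric.closedBall_subset_closedBall (by linarith))
  let f : C_c(Z, ℝ≥0) :=
    ⟨⟨_, hcont⟩, HasCompactSupport.intro hK' hzero⟩
  have hf1 : ∀ n : Measure Z, n (Metric.ball x r) ≤ ∫⁻ z, (f z : ENNReal) ∂n := by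
    intro n
    rw [← lintegral_indicator_one Metric.isOpen_ball.measurableSet]
    apply lintegral_mono
    intro z
    by_cases hz : z ∈ Metric.ball x r
    · rw [Set.indicator_of_mem hz]
      change ((1 : ℝ≥0) : ENNReal) ≤ (Real.toNNReal (min 1 (3 - 2 * dist z x / r)) : ENNReal)
      rw [ENNReal.coe_le_coe, Real.one_le_toNNReal]
      apply le_min le_rfl
      rw [Metric.mem_ball] at hz
      have : 2 * dist z x / r ≤ 2 := by rw [div_le_iff₀ hr]; linarith
      linarith
    · rw [Set.indicator_of_notMem hz]; exact zero_le
  have hf2 : ∀ n : Measure Z, ∫⁻ z, (f z : ENNReal) ∂n ≤ n (Metric.ball x (2 * r)) := by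
    intro n
    rw [← lintegral_indicator_one Metric.isOpen_ball.measurableSet]
    apply lintegral_mono
    intro z
    by_cases hz : z ∈ Metric.ball x (2 * r)
    · rw [Set.indicator_of_mem hz]
      change (Real.toNNReal (min 1 (3 - 2 * dist z x / r)) : ENNReal) ≤ ((1 : ℝ≥0) : ENNReal)
      rw [ENNReal.coe_le_coe, Real.toNNReal_le_one]
      exact min_le_left _ _
    · rw [Set.indicator_of_notMem hz]
      change (Real.toNNReal (min 1 (3 - 2 * dist z x / r)) : ENNReal) ≤ 0
      rw [hzero z (fun h => hz (Metric.closedBall_subset_ball (by linarith) h))]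
      simp
  constructor
  · intro a ha
    refine le_trans ?_ (hf2 _)
    rw [hΛ]
    refine ge_of_tendsto (hl f) ?_
    filter_upwards [ha] with n hn
    exact hn.trans (hf1 _)
  · intro a ha
    refine (hf1 _).trans ?_
    rw [hΛ]
    refine le_of_tendsto (hl f) ?_
    filter_upwards [ha] with n hn
    exact (hf2 _).trans hn

/-! ### The homogeneous measure -/

open MeasureTheory in
/-- A measure which is `β`-homogeneous, up to a truncation of radii. -/
structure HomM (Z : Type*) [MetricSpace Z] [MeasurableSpace Z] (β : ℝ) (μ : Measure Z)
    (κ : ℝ → ℝ) (C C0 : ℝ) : Prop where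
  C_ge : 1 ≤ C
  C0_ge : 1 ≤ C0
  mono : Monotone κ
  pos : ∀ R, 0 < R → 0 < κ R
  le : ∀ R, κ R ≤ R
  ge : ∀ R, 0 < R → (∃ a b : Z, R ≤ dist a b) → R ≤ C0 * κ R
  hom : ∀ x x' : Z, ∀ r R : ℝ, 0 < r → r ≤ R → dist x x' ≤ R →
    μ (Metric.ball x (κ R)) ≤ ENNReal.ofReal (C * (R / r) ^ β) * μ (Metric.ball x' (κ r))
  fin : ∀ x R, 0 < R → μ (Metric.ball x (κ R)) ≠ ⊤
  ne_zero : ∀ x R, 0 < R → μ (Metric.ball x (κ R)) ≠ 0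
  alt : (∀ R, κ R = R) ∨ ∃ Rs m0 m1 : ℝ, 0 < Rs ∧ 0 < m0 ∧ 0 < m1 ∧ (∀ R, κ R = min R Rs) ∧
    ∀ x : Z, ENNReal.ofReal m0 ≤ μ (Metric.ball x Rs) ∧ μ (Metric.ball x Rs) ≤ ENNReal.ofReal m1

open MeasureTheory in
lemma limit_hom {Z : Type*} [MetricSpace Z] [MeasurableSpace Z]
    (U : Ultrafilter ℕ) (ν : ℕ → Measure Z) (μ : Measure Z) {C β : ℝ} (hC : 1 ≤ C)
    (hμ : ∀ x : Z, ∀ r : ℝ, 0 < r → IsCompact (Metric.closedBall x (2 * r)) →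
      (∀ a : ENNReal, (∀ᶠ n in (U : Filter ℕ), a ≤ ν n (Metric.ball x r)) →
        a ≤ μ (Metric.ball x (2 * r))) ∧
      (∀ a : ENNReal, (∀ᶠ n in (U : Filter ℕ), ν n (Metric.ball x (2 * r)) ≤ a) →
        μ (Metric.ball x r) ≤ a)) (x x' : Z) (r R : ℝ) (hr : 0 < r) (hrR : r ≤ R)
    (hcpt : ∀ z : Z, IsCompact (Metric.closedBall z (2 * R)))
    (hν : ∀ᶠ n in (U : Filter ℕ), ν n (Metric.ball x (2 * R)) ≤
      ENNReal.ofReal (C * ((2 * R) / (r / 2)) ^ β) * ν n (Metric.ball x' (r / 2))) :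
    μ (Metric.ball x R) ≤ ENNReal.ofReal (C * 4 ^ β * (R / r) ^ β) * μ (Metric.ball x' r) := by
  have hR : 0 < R := by linarith
  have e : C * 4 ^ β * (R / r) ^ β = C * ((2 * R) / (r / 2)) ^ β := by
    rw [mul_assoc, ← Real.mul_rpow (by norm_num) (by positivity)]
    congr 2
    field_simp
    norm_num
  rw [e]
  have hk0 : 0 < C * ((2 * R) / (r / 2)) ^ β := by positivity
  set k := ENNReal.ofReal (C * ((2 * R) / (r / 2)) ^ β) with hk
  have hk1 : k ≠ 0 := by rw [hk]; simpa using hk0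
  have hk2 : k ≠ ⊤ := ENNReal.ofReal_ne_top
  by_contra hcon
  rw [not_le] at hcon
  have h1 : μ (Metric.ball x' r) < μ (Metric.ball x R) / k := by
    rw [ENNReal.lt_div_iff_mul_lt (Or.inl hk1) (Or.inl hk2), mul_comm]
    exact hcon
  obtain ⟨a, ha1, ha2⟩ := exists_between h1
  rw [ENNReal.lt_div_iff_mul_lt (Or.inl hk1) (Or.inl hk2), mul_comm] at ha2
  have h2 : ∀ᶠ n in (U : Filter ℕ), ν n (Metric.ball x' (r / 2)) < a := by
    by_contra hne
    rw [← Ultrafilter.eventually_not] at hne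
    have h3 := (hμ x' (r / 2) (by linarith) ((hcpt x').of_isClosed_subset
      Metric.isClosed_closedBall (Metric.closedBall_subset_closedBall (by linarith)))).1 a (by
        filter_upwards [hne] with n hn
        exact not_lt.mp hn)
    rw [mul_div_cancel₀ r (by norm_num)] at h3
    exact absurd ha1 (not_lt.mpr h3)
  have h3 := (hμ x R hR (hcpt x)).2 (k * a) (by
    filter_upwards [hν, h2] with n hn hn2
    refine hn.trans ?_
    gcongr)
  exact absurd ha2 (not_lt.mpr h3)

open MeasureTheory in
lemma exists_hom_bounded {Z : Type*} [MetricSpace Z] [CompleteSpace Z] [MeasurableSpace Z]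
    [BorelSpace Z] {L β : ℝ} {N : ℕ} (hL : 100 ≤ L) (hβ : 0 < β) (hNL : 2 * (N : ℝ) ≤ L ^ β)
    (hcov : Cov Z L N) (a b : Z) (hab : a ≠ b) (D : ℝ) (hD : ∀ x y : Z, dist x y ≤ D) :
    ∃ (μ : Measure Z) (κ : ℝ → ℝ) (C C0 : ℝ), HomM Z β μ κ C C0 := by
  haveI := cov_locallyCompact hL hcov a b hab
  haveI : Nonempty Z := ⟨a⟩
  obtain ⟨C, hC, hdis⟩ := discrete_meas hL hβ hNL hcov
  have hΔ : 0 < dist a b := dist_pos.mpr hab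
  obtain ⟨R0, hR00, hR0⟩ : ∃ R0 : ℝ, 0 < R0 ∧ 64 * R0 = dist a b :=
    ⟨dist a b / 64, by positivity, by ring⟩
  have hdis' : ∀ n : ℕ, ∃ ν : Measure Z,
        (∀ x x' : Z, ∀ r R : ℝ, R0 / (n + 1) ≤ r → r ≤ R → R ≤ R0 → dist x x' ≤ R →
          ν (Metric.ball x R) ≤ ENNReal.ofReal (C * (R / r) ^ β) * ν (Metric.ball x' r)) ∧
        ∀ x, ν (Metric.ball x R0) ≤ ENNReal.ofReal C ∧
          1 ≤ ENNReal.ofReal C * ν (Metric.ball x R0) := by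
    intro n
    apply hdis _ R0 (by positivity)
    · apply div_le_self hR00.le
      have : (0 : ℝ) ≤ n := Nat.cast_nonneg n
      linarith
    · exact ⟨a, b, by linarith⟩
  choose ν hν1 hν2 using hdis'
  set U := Filter.hyperfilter ℕ with hU
  have hUle : (U : Filter ℕ) ≤ Filter.atTop := Nat.hyperfilter_le_atTop
  obtain ⟨μ, hμ⟩ := exists_limit_meas U ν (by
    intro x
    exact ⟨R0, hR00, ENNReal.ofReal C, ENNReal.ofReal_ne_top,
      Filter.Eventually.of_forall fun n => (hν2 n x).1⟩)
  have hcpt : ∀ R, R ≤ 8 * R0 → ∀ x : Z, IsCompact (Metric.closedBall x R) := by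
    intro R hR x
    exact cov_compact hL hcov R ⟨a, b, by linarith⟩ x
  have hsm : ∀ r : ℝ, 0 < r → ∀ᶠ n : ℕ in (U : Filter ℕ), R0 / (n + 1) ≤ r := by
    intro r hr
    apply hUle
    obtain ⟨k, hk⟩ := exists_nat_gt (R0 / r)
    filter_upwards [Filter.eventually_ge_atTop k] with n hn
    have : (k : ℝ) ≤ n := by exact_mod_cast hn
    rw [div_lt_iff₀ hr] at hk
    rw [div_le_iff₀ (by positivity)]
    nlinarith
  set Rs := R0 / 2 with hRs
  have hRs0 : 0 < Rs := by positivity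
  set C' := C * 4 ^ β with hC'
  have h4 : (1 : ℝ) ≤ 4 ^ β := Real.one_le_rpow (by norm_num) hβ.le
  have hC'1 : 1 ≤ C' := one_le_mul_of_one_le_of_one_le hC h4
  have hhom : ∀ x x' : Z, ∀ r R : ℝ, 0 < r → r ≤ R → R ≤ Rs → dist x x' ≤ R →
      μ (Metric.ball x R) ≤ ENNReal.ofReal (C' * (R / r) ^ β) * μ (Metric.ball x' r) := by
    intro x x' r R hr hrR hR hxx
    apply limit_hom U ν μ hC hμ x x' r R hr hrR
    · exact hcpt _ (by rw [hRs] at hR; linarith)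
    · filter_upwards [hsm (r / 2) (by linarith)] with n hn
      exact hν1 n x x' (r / 2) (2 * R) hn (by linarith) (by rw [hRs] at hR; linarith)
        (by linarith [dist_nonneg (x := x) (y := x')])
  have hup : ∀ x : Z, μ (Metric.ball x Rs) ≤ ENNReal.ofReal C := by
    intro x
    apply (hμ x Rs hRs0 (hcpt _ (by rw [hRs]; linarith) x)).2
    apply Filter.Eventually.of_forall
    intro n
    have : 2 * Rs = R0 := by rw [hRs]; ring
    rw [this]
    exact (hν2 n x).1
  have hlow : ∀ x : Z, ENNReal.ofReal (C * C')⁻¹ ≤ μ (Metric.ball x Rs) := by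
    intro x
    have e2 : 2 * (Rs / 2) = Rs := by ring
    have h1 := (hμ x (Rs / 2) (by linarith) (hcpt _ (by rw [hRs]; linarith) x)).1
      (ENNReal.ofReal (C * C')⁻¹) (by
        filter_upwards [hsm (Rs / 2) (by linarith)] with n hn
        have h2 := hν1 n x x (Rs / 2) R0 hn (by rw [hRs]; linarith) le_rfl (by simp [hR00.le])
        have e : R0 / (Rs / 2) = 4 := by rw [hRs]; field_simp; norm_num
        rw [e] at h2
        have h3 := (hν2 n x).2
        have h4 : 1 ≤ ENNReal.ofReal (C * C') * ν n (Metric.ball x (Rs / 2)) := by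
          rw [ENNReal.ofReal_mul (by linarith), mul_assoc]
          exact h3.trans (by gcongr)
        rw [ENNReal.ofReal_inv_of_pos (by positivity)]
        rw [ENNReal.inv_le_iff_le_mul (fun _ => by
          have : 0 < C * C' := by positivity
          exact (ENNReal.ofReal_pos.mpr this).ne') (fun h => absurd h ENNReal.ofReal_ne_top)]
        exact h4)
    rwa [e2] at h1
  set C2b := C' * (C * (C * C')) with hC2b
  have hCCC : 1 ≤ C * (C * C') :=
    one_le_mul_of_one_le_of_one_le hC (one_le_mul_of_one_le_of_one_le hC hC'1)
  have hCC2 : C' ≤ C2b := le_mul_of_one_le_right (by linarith) hCCC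
  have hhom2 : ∀ x x' : Z, ∀ r R : ℝ, 0 < r → r ≤ R → dist x x' ≤ R →
    μ (Metric.ball x (min R Rs)) ≤
      ENNReal.ofReal (C2b * (R / r) ^ β) * μ (Metric.ball x' (min r Rs)) := by
    intro x x' r R hr hrR hxx
    have hR : 0 < R := by linarith
    have hRr : 0 ≤ (R / r) ^ β := by positivity
    rcases le_total R Rs with h | h
    · rw [min_eq_left h, min_eq_left (hrR.trans h)]
      refine (hhom x x' r R hr hrR h hxx).trans ?_
      gcongr
    · rw [min_eq_right h]
      have h1 := hhom x' x' (min r Rs) Rs (lt_min hr hRs0) (min_le_right _ _) le_rfl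
        (by simp [hRs0.le])
      have h2 : Rs / min r Rs ≤ R / r := by
        rcases le_total r Rs with h' | h'
        · rw [min_eq_left h']; gcongr
        · rw [min_eq_right h', div_self hRs0.ne', one_le_div hr]; exact hrR
      have h3 : (Rs / min r Rs) ^ β ≤ (R / r) ^ β :=
        Real.rpow_le_rpow (div_nonneg hRs0.le (lt_min hr hRs0).le) h2 hβ.le
      calc μ (Metric.ball x Rs) ≤ ENNReal.ofReal C := hup x
        _ = ENNReal.ofReal (C * (C * C')) * ENNReal.ofReal (C * C')⁻¹ := by
            rw [← ENNReal.ofReal_mul (by positivity)]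
            congr 1
            field_simp
        _ ≤ ENNReal.ofReal (C * (C * C')) * μ (Metric.ball x' Rs) := by
            gcongr; exact hlow x'
        _ ≤ ENNReal.ofReal (C * (C * C')) * (ENNReal.ofReal (C' * (Rs / min r Rs) ^ β) *
              μ (Metric.ball x' (min r Rs))) := by gcongr
        _ ≤ ENNReal.ofReal (C * (C * C')) * (ENNReal.ofReal (C' * (R / r) ^ β) *
              μ (Metric.ball x' (min r Rs))) := by gcongr
        _ = _ := by
            rw [← mul_assoc, ← ENNReal.ofReal_mul (by positivity)]
            congr 2
            rw [hC2b]; ring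
  have hD0 : 0 < D := lt_of_lt_of_le hΔ (hD a b)
  refine ⟨μ, fun R => min R Rs, C2b, max 1 (D / Rs), hC'1.trans hCC2, le_max_left _ _, ?_, ?_,
    ?_, ?_, hhom2, ?_, ?_, Or.inr ⟨Rs, (C * C')⁻¹, C, hRs0, by positivity, by linarith,
      fun _ => rfl, fun x => ⟨hlow x, hup x⟩⟩⟩
  · intro r R h; exact min_le_min_right _ h
  · intro R hR; exact lt_min hR hRs0
  · intro R; exact min_le_left _ _
  · rintro R hR ⟨u, v, huv⟩
    rcases le_total R Rs with h | h
    · simp only [min_eq_left h]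
      exact le_mul_of_one_le_left hR.le (le_max_left _ _)
    · simp only [min_eq_right h]
      calc R ≤ D := huv.trans (hD u v)
        _ = D / Rs * Rs := by field_simp
        _ ≤ _ := by gcongr; exact le_max_right _ _
  · intro x R hR
    refine ne_top_of_le_ne_top ENNReal.ofReal_ne_top (le_trans ?_ (hup x))
    exact measure_mono (Metric.ball_subset_ball (min_le_right _ _))
  · intro x R hR h0
    have h1 := hhom x x (min R Rs) Rs (lt_min hR hRs0) (min_le_right _ _) le_rfl
        (by simp [hRs0.le])
    rw [h0, mul_zero] at h1
    have h2 := (hlow x).trans h1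
    rw [nonpos_iff_eq_zero, ENNReal.ofReal_eq_zero, ← not_lt] at h2
    exact h2 (by positivity)

open MeasureTheory in
lemma exists_hom_unbounded {Z : Type*} [MetricSpace Z] [CompleteSpace Z] [MeasurableSpace Z]
    [BorelSpace Z] {L β : ℝ} {N : ℕ} (hL : 100 ≤ L) (hβ : 0 < β) (hNL : 2 * (N : ℝ) ≤ L ^ β)
    (hcov : Cov Z L N) (hD : ∀ D : ℝ, ∃ x y : Z, D ≤ dist x y) :
    ∃ (μ : Measure Z) (κ : ℝ → ℝ) (C C0 : ℝ), HomM Z β μ κ C C0 := by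
  obtain ⟨o, b, hob⟩ := hD 1
  haveI := cov_locallyCompact hL hcov o b (dist_pos.mp (by linarith))
  haveI : Nonempty Z := ⟨o⟩
  obtain ⟨C, hC, hdis⟩ := discrete_meas hL hβ hNL hcov
  have hdis' : ∀ n : ℕ, ∃ ν : Measure Z,
        (∀ x x' : Z, ∀ r R : ℝ, 1 / ((n : ℝ) + 1) ≤ r → r ≤ R → R ≤ (n : ℝ) + 1 → dist x x' ≤ R →
          ν (Metric.ball x R) ≤ ENNReal.ofReal (C * (R / r) ^ β) * ν (Metric.ball x' r)) ∧
        ν (Metric.ball o 1) = 1 := by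
    intro n
    have hn : (0 : ℝ) ≤ n := Nat.cast_nonneg n
    have hn1 : 1 / ((n : ℝ) + 1) ≤ 1 := by rw [div_le_one (by positivity)]; linarith
    obtain ⟨ν, h1, h2⟩ := hdis (1 / ((n : ℝ) + 1)) (n + 1) (by positivity) (by linarith) (hD _)
    have hne0 : ν (Metric.ball o 1) ≠ 0 := by
      intro h0
      have h3 := h1 o o 1 (n + 1) hn1 (by linarith) le_rfl (by simp; linarith)
      have h4 := (h2 o).2
      rw [h0, mul_zero, nonpos_iff_eq_zero] at h3
      rw [h3] at h4
      simp at h4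
    have hnet : ν (Metric.ball o 1) ≠ ⊤ := by
      refine ne_top_of_le_ne_top ENNReal.ofReal_ne_top (le_trans ?_ (h2 o).1)
      exact measure_mono (Metric.ball_subset_ball (by linarith))
    refine ⟨(ν (Metric.ball o 1))⁻¹ • ν, ?_, ?_⟩
    · intro x x' r R hr hrR hR hxx
      rw [Measure.smul_apply, Measure.smul_apply, smul_eq_mul, smul_eq_mul, mul_left_comm]
      gcongr
      exact h1 x x' r R hr hrR hR hxx
    · rw [Measure.smul_apply, smul_eq_mul]
      exact ENNReal.inv_mul_cancel hne0 hnet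
  choose ν hν1 hν2 using hdis'
  set U := Filter.hyperfilter ℕ with hU
  have hUle : (U : Filter ℕ) ≤ Filter.atTop := Nat.hyperfilter_le_atTop
  have hsm : ∀ r : ℝ, 0 < r → ∀ᶠ n : ℕ in (U : Filter ℕ), 1 / ((n : ℝ) + 1) ≤ r := by
    intro r hr
    apply hUle
    obtain ⟨k, hk⟩ := exists_nat_gt (1 / r)
    filter_upwards [Filter.eventually_ge_atTop k] with n hn
    have : (k : ℝ) ≤ n := by exact_mod_cast hn
    rw [div_lt_iff₀ hr] at hk
    rw [div_le_iff₀ (by positivity)]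
    nlinarith
  have hbg : ∀ R : ℝ, ∀ᶠ n : ℕ in (U : Filter ℕ), R ≤ (n : ℝ) + 1 := by
    intro R
    apply hUle
    obtain ⟨k, hk⟩ := exists_nat_gt R
    filter_upwards [Filter.eventually_ge_atTop k] with n hn
    have : (k : ℝ) ≤ n := by exact_mod_cast hn
    linarith
  obtain ⟨μ, hμ⟩ := exists_limit_meas U ν (by
    intro x
    refine ⟨1, one_pos, ENNReal.ofReal (C * ((max 1 (dist x o)) / 1) ^ β),
      ENNReal.ofReal_ne_top, ?_⟩
    filter_upwards [hsm 1 one_pos, hbg (max 1 (dist x o))] with n hn1 hn2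
    have h1 := hν1 n x o 1 (max 1 (dist x o)) hn1 (le_max_left _ _) hn2 (le_max_right _ _)
    rw [hν2, mul_one] at h1
    exact (measure_mono (Metric.ball_subset_ball (le_max_left _ _))).trans h1)
  have hcpt : ∀ R, ∀ x : Z, IsCompact (Metric.closedBall x R) := by
    intro R x
    exact cov_compact hL hcov R (hD _) x
  set C' := C * 4 ^ β with hC'
  have h4 : (1 : ℝ) ≤ 4 ^ β := Real.one_le_rpow (by norm_num) hβ.le
  have hC'1 : 1 ≤ C' := one_le_mul_of_one_le_of_one_le hC h4
  have hhom : ∀ x x' : Z, ∀ r R : ℝ, 0 < r → r ≤ R → dist x x' ≤ R →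
      μ (Metric.ball x R) ≤ ENNReal.ofReal (C' * (R / r) ^ β) * μ (Metric.ball x' r) := by
    intro x x' r R hr hrR hxx
    apply limit_hom U ν μ hC hμ x x' r R hr hrR
    · exact hcpt _
    · filter_upwards [hsm (r / 2) (by linarith), hbg (2 * R)] with n hn hn2
      exact hν1 n x x' (r / 2) (2 * R) hn (by linarith) hn2
        (by linarith [dist_nonneg (x := x) (y := x')])
  have hlow : 1 ≤ μ (Metric.ball o (2 * 1)) := by
    apply (hμ o 1 one_pos (hcpt _ _)).1
    exact Filter.Eventually.of_forall fun n => (hν2 n).ge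
  have hup : μ (Metric.ball o (1 / 2)) ≤ 1 := by
    apply (hμ o (1 / 2) (by norm_num) (hcpt _ _)).2
    apply Filter.Eventually.of_forall
    intro n
    rw [mul_one_div_cancel (by norm_num)]
    exact (hν2 n).le
  refine ⟨μ, id, C', 1, hC'1, le_rfl, monotone_id, fun R hR => hR, fun R => le_rfl, ?_, hhom,
    ?_, ?_, Or.inl fun R => rfl⟩
  · intro R _ _; simp
  · intro x R hR
    have h1 := hhom x o (1 / 2) (max (1 / 2) (max R (dist x o))) (by norm_num) (le_max_left _ _)
      ((le_max_right _ _).trans (le_max_right _ _))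
    refine ne_top_of_le_ne_top ?_ (le_trans (measure_mono (Metric.ball_subset_ball ?_)) h1)
    · exact ENNReal.mul_ne_top ENNReal.ofReal_ne_top (ne_top_of_le_ne_top ENNReal.one_ne_top hup)
    · exact (le_max_left _ _).trans (le_max_right _ _)
  · intro x R hR h0
    have h1 := hhom o x R (max (2 * 1) (max R (dist o x))) hR
      ((le_max_left _ _).trans (le_max_right _ _)) ((le_max_right _ _).trans (le_max_right _ _))
    rw [id] at h0
    rw [h0, mul_zero] at h1
    have h2 := hlow.trans ((measure_mono (Metric.ball_subset_ball (le_max_left _ _))).trans h1)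
    simp at h2

open MeasureTheory in
lemma exists_hom {Z : Type*} [MetricSpace Z] [CompleteSpace Z] [Nontrivial Z] [MeasurableSpace Z]
    [BorelSpace Z] {L β : ℝ} {N : ℕ} (hL : 100 ≤ L) (hβ : 0 < β) (hNL : 2 * (N : ℝ) ≤ L ^ β)
    (hcov : Cov Z L N) :
    ∃ (μ : Measure Z) (κ : ℝ → ℝ) (C C0 : ℝ), HomM Z β μ κ C C0 := by
  by_cases h : ∃ D : ℝ, ∀ x y : Z, dist x y ≤ D
  · obtain ⟨D, hD⟩ := h
    obtain ⟨a, b, hab⟩ := exists_pair_ne Z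
    exact exists_hom_bounded hL hβ hNL hcov a b hab D hD
  · push Not at h
    exact exists_hom_unbounded hL hβ hNL hcov
      (fun D => by obtain ⟨x, y, hxy⟩ := h D; exact ⟨x, y, hxy.le⟩)

/-! ### The gauge -/

/-- Properties of the gauge function `φ`. -/
structure Gauge (Z : Type*) [MetricSpace Z] (φ : Z → ℝ → ℝ) (A : ℝ) : Prop where
  A_ge : 1 ≤ A
  pos : ∀ x R, 0 < R → 0 < φ x R
  mono : ∀ x r R, 0 < r → r ≤ R → φ x r ≤ φ x R
  comp : ∀ x w r R, 0 < r → r ≤ R → dist x w ≤ R → φ x R ≤ A * (R / r) * φ w r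

/-- Reverse doubling. -/
def RevD (Z : Type*) [MetricSpace Z] (φ : Z → ℝ → ℝ) (A a : ℝ) : Prop :=
  ∀ x z : Z, ∀ r R : ℝ, 0 < r → r ≤ R → R ≤ dist x z → φ x r ≤ A * (r / R) ^ a * φ x R

open MeasureTheory in
/-- The mass function. -/
noncomputable def massF {Z : Type*} [MetricSpace Z] [MeasurableSpace Z] (μ : Measure Z)
    (κ : ℝ → ℝ) (x : Z) (R : ℝ) : ℝ := (μ (Metric.ball x (κ R))).toReal

open MeasureTheory in
/-- The gauge function. -/
noncomputable def gaugeF {Z : Type*} [MetricSpace Z] [MeasurableSpace Z] (μ : Measure Z)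
    (κ : ℝ → ℝ) (β : ℝ) (x : Z) (R : ℝ) : ℝ := massF μ κ x R ^ (1 / β)

section gauge
open MeasureTheory
variable {Z : Type*} [MetricSpace Z] [MeasurableSpace Z] {β : ℝ} {μ : Measure Z}
    {κ : ℝ → ℝ} {C C0 : ℝ}

lemma HomM.mass_pos (h : HomM Z β μ κ C C0) (x : Z) (R : ℝ) (hR : 0 < R) : 0 < massF μ κ x R :=
  ENNReal.toReal_pos (h.ne_zero x R hR) (h.fin x R hR)

lemma HomM.mass_mono (h : HomM Z β μ κ C C0) (x : Z) (r R : ℝ) (hr : 0 < r) (hrR : r ≤ R) :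
    massF μ κ x r ≤ massF μ κ x R :=
  ENNReal.toReal_mono (h.fin x R (by linarith))
    (measure_mono (Metric.ball_subset_ball (h.mono hrR)))

lemma HomM.mass_hom (h : HomM Z β μ κ C C0) (x x' : Z) (r R : ℝ) (hr : 0 < r) (hrR : r ≤ R)
    (hxx : dist x x' ≤ R) : massF μ κ x R ≤ C * (R / r) ^ β * massF μ κ x' r := by
  have hR : 0 < R := by linarith
  have hC := h.C_ge
  have h1 := ENNReal.toReal_mono (ENNReal.mul_ne_top ENNReal.ofReal_ne_top (h.fin x' r hr))
    (h.hom x x' r R hr hrR hxx)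
  rwa [ENNReal.toReal_mul, ENNReal.toReal_ofReal (by positivity)] at h1

lemma HomM.gauge (h : HomM Z β μ κ C C0) (hβ : 0 < β) :
    Gauge Z (gaugeF μ κ β) (C ^ (1 / β)) where
  A_ge := Real.one_le_rpow h.C_ge (by positivity)
  pos x R hR := Real.rpow_pos_of_pos (h.mass_pos x R hR) _
  mono x r R hr hrR := Real.rpow_le_rpow (h.mass_pos x r hr).le (h.mass_mono x r R hr hrR)
    (by positivity)
  comp x x' r R hr hrR hxx := by
    have hR : 0 < R := by linarith
    have hC := h.C_ge
    have h0 := h.mass_pos x R hR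
    have h1 := h.mass_pos x' r hr
    have h2 := Real.rpow_le_rpow h0.le (h.mass_hom x x' r R hr hrR hxx)
      (show 0 ≤ 1 / β by positivity)
    rw [Real.mul_rpow (by positivity) h1.le, Real.mul_rpow (by positivity) (by positivity),
      ← Real.rpow_mul (by positivity), mul_one_div_cancel hβ.ne', Real.rpow_one] at h2
    exact h2

lemma HomM.gauge_pow (h : HomM Z β μ κ C C0) (hβ : 0 < β) (x : Z) (R : ℝ) (hR : 0 < R) :
    μ (Metric.ball x (κ R)) = ENNReal.ofReal (gaugeF μ κ β x R ^ β) := by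
  unfold gaugeF
  rw [← Real.rpow_mul (h.mass_pos x R hR).le, one_div_mul_cancel hβ.ne', Real.rpow_one]
  exact (ENNReal.ofReal_toReal (h.fin x R hR)).symm

lemma HomM.step (h : HomM Z β μ κ C C0) [BorelSpace Z] (hβ : 0 < β) (hUP : UP Z) :
    ∃ q θ : ℝ, 0 < q ∧ q < 1 ∧ 0 < θ ∧ θ < 1 ∧ ∀ x z : Z, ∀ R : ℝ, 0 < R → R ≤ dist x z →
      massF μ κ x (q * R) ≤ θ * massF μ κ x R := by
  obtain ⟨c, hc, hUP⟩ := hUP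
  have hC := h.C_ge
  have hC0 := h.C0_ge
  by_cases hex : ∃ x z : Z, x ≠ z
  · have hc2 : c ≤ 1 / 2 := by
      obtain ⟨x, z, hxz⟩ := hex
      have h0 := dist_pos.mpr hxz
      obtain ⟨y, h1, h2⟩ := hUP x z _ h0 le_rfl
      have h3 : c * dist x z ≤ 1 / 2 * dist x z := by linarith
      exact le_of_mul_le_mul_right h3 h0
    set q := c / (2 * C0) with hq
    have hq0 : 0 < q := by positivity
    have hq1 : q < 1 := by rw [hq, div_lt_one (by positivity)]; linarith
    set δ := (C * q⁻¹ ^ β)⁻¹ with hδ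
    have hqb : 1 ≤ q⁻¹ ^ β := Real.one_le_rpow (by rw [one_le_inv₀ hq0]; exact hq1.le) hβ.le
    have hden : 1 ≤ C * q⁻¹ ^ β := one_le_mul_of_one_le_of_one_le hC hqb
    have hδ0 : 0 < δ := by positivity
    have hδ1 : δ ≤ 1 := by rw [hδ]; exact inv_le_one_of_one_le₀ hden
    refine ⟨q, 1 - δ / 2, hq0, hq1, by linarith, by linarith, ?_⟩
    intro x z R hR hRz
    have hκ := h.pos R hR
    have hκR := h.le R
    have hge := h.ge R hR ⟨x, z, hRz⟩
    obtain ⟨y, hy1, hy2⟩ := hUP x z (κ R) hκ (hκR.trans hRz)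
    set r := c * κ R / 2 with hr
    have hqr : q * R ≤ r := by
      calc q * R ≤ q * (C0 * κ R) := by gcongr
        _ = r := by rw [hq, hr]; field_simp
    have hqR : 0 < q * R := by positivity
    have hqRR : q * R ≤ R := by nlinarith
    have hdisj : Disjoint (Metric.ball x r) (Metric.ball y r) :=
      Metric.ball_disjoint_ball (by rw [hr]; linarith)
    have h1 : μ (Metric.ball x (κ (q * R))) + μ (Metric.ball y (κ (q * R))) ≤
        μ (Metric.ball x (κ R)) := by
      have hle := (h.le (q * R)).trans hqr
      rw [← measure_union (hdisj.mono (Metric.ball_subset_ball hle) (Metric.ball_subset_ball hle))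
        Metric.isOpen_ball.measurableSet]
      apply measure_mono
      have hrs : r ≤ κ R / 4 := by rw [hr]; nlinarith
      apply Set.union_subset
      · exact Metric.ball_subset_ball (by linarith)
      · intro w hw
        rw [Metric.mem_ball] at hw ⊢
        have := dist_triangle w y x
        rw [dist_comm y x] at this
        linarith
    have h2 : massF μ κ x (q * R) + massF μ κ y (q * R) ≤ massF μ κ x R := by
      unfold massF
      rw [← ENNReal.toReal_add (h.fin x _ hqR) (h.fin y _ hqR)]
      exact ENNReal.toReal_mono (h.fin x R hR) h1
    have h3 := h.mass_hom x y (q * R) R hqR hqRR (by linarith)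
    have e : R / (q * R) = q⁻¹ := by field_simp
    rw [e] at h3
    have h4 : δ * massF μ κ x R ≤ massF μ κ y (q * R) := by
      rw [hδ, inv_mul_le_iff₀ (by positivity)]
      exact h3
    have h5 := h.mass_pos x R hR
    nlinarith
  · refine ⟨1 / 2, 1 / 2, by norm_num, by norm_num, by norm_num, by norm_num, ?_⟩
    intro x z R hR hRz
    push Not at hex
    rw [hex x z, dist_self] at hRz
    linarith

lemma HomM.revD (h : HomM Z β μ κ C C0) [BorelSpace Z] (hβ : 0 < β) (hUP : UP Z) :
    ∃ A a : ℝ, 1 ≤ A ∧ 0 < a ∧ RevD Z (gaugeF μ κ β) A a := by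
  obtain ⟨q, θ, hq0, hq1, hθ0, hθ1, hst⟩ := h.step hβ hUP
  set b := Real.logb q θ with hb
  have hb0 : 0 < b := Real.logb_pos_of_base_lt_one hq0 hq1 hθ0 hθ1
  have hqb : q ^ b = θ := Real.rpow_logb hq0 hq1.ne hθ0
  have hit : ∀ n : ℕ, ∀ x z : Z, ∀ R : ℝ, 0 < R → R ≤ dist x z →
      massF μ κ x (q ^ n * R) ≤ θ ^ n * massF μ κ x R := by
    intro n x z R hR hRz
    induction n with
    | zero => simp
    | succ n ih =>
      have hqn : q ^ n ≤ 1 := pow_le_one₀ hq0.le hq1.le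
      have h1 := hst x z (q ^ n * R) (by positivity) (by nlinarith)
      calc massF μ κ x (q ^ (n + 1) * R) = massF μ κ x (q * (q ^ n * R)) := by
            congr 1; ring
        _ ≤ θ * massF μ κ x (q ^ n * R) := h1
        _ ≤ θ * (θ ^ n * massF μ κ x R) := by gcongr
        _ = _ := by ring
  have hmass : ∀ x z : Z, ∀ r R : ℝ, 0 < r → r ≤ R → R ≤ dist x z →
      massF μ κ x r ≤ q⁻¹ ^ b * (r / R) ^ b * massF μ κ x R := by
    intro x z r R hr hrR hRz
    have hR : 0 < R := by linarith
    obtain ⟨n, hn1, hn2⟩ := exists_nat_pow_near_of_lt_one (x := r / R) (y := q) (by positivity)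
      ((div_le_one hR).mpr hrR) hq0 hq1
    have h1 : r ≤ q ^ n * R := by rwa [div_le_iff₀ hR] at hn2
    have h2 := hit n x z R hR hRz
    have h3 := h.mass_mono x r _ hr h1
    have h4 : θ ^ n ≤ q⁻¹ ^ b * (r / R) ^ b := by
      rw [← hqb, ← Real.rpow_natCast, ← Real.rpow_mul hq0.le, mul_comm b, Real.rpow_mul hq0.le,
        Real.rpow_natCast, ← Real.mul_rpow (by positivity) (by positivity)]
      apply Real.rpow_le_rpow (by positivity) _ hb0.le
      rw [inv_mul_eq_div, le_div_iff₀ hq0, ← pow_succ]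
      exact hn1.le
    have h5 := h.mass_pos x R hR
    exact (h3.trans h2).trans (by gcongr)
  refine ⟨(q⁻¹ ^ b) ^ (1 / β), b * (1 / β), ?_, by positivity, ?_⟩
  · apply Real.one_le_rpow _ (by positivity)
    apply Real.one_le_rpow _ hb0.le
    rw [one_le_inv₀ hq0]; exact hq1.le
  · intro x z r R hr hrR hRz
    have hR : 0 < R := by linarith
    have h5 := h.mass_pos x R hR
    have h2 := Real.rpow_le_rpow (h.mass_pos x r hr).le (hmass x z r R hr hrR hRz)
      (show 0 ≤ 1 / β by positivity)
    rw [Real.mul_rpow (by positivity) h5.le, Real.mul_rpow (by positivity) (by positivity),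
      ← Real.rpow_mul (x := r / R) (by positivity)] at h2
    exact h2

end gauge

/-! ### The metric -/

lemma gauge_metric {Z : Type*} [MetricSpace Z] [Nonempty Z] {φ : Z → ℝ → ℝ} {A : ℝ}
    (h : Gauge Z φ A) :
    ∃ ρ : Z → Z → ℝ, (∀ x, ρ x x = 0) ∧ (∀ x y, ρ x y = ρ y x) ∧
      (∀ x y z, ρ x z ≤ ρ x y + ρ y z) ∧
      ∀ x y, x ≠ y → φ x (dist x y) ≤ ρ x y ∧ ρ x y ≤ A ^ 2 * φ x (dist x y) := by
  have hA := h.A_ge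
  set g : Z → Z → (Z × {R : ℝ // 0 < R}) → ℝ := fun x y p =>
    φ p.1 p.2 * |min 1 (dist p.1 x / p.2) - min 1 (dist p.1 y / p.2)| with hg
  haveI : Nonempty {R : ℝ // 0 < R} := ⟨⟨1, one_pos⟩⟩
  have hsymm : ∀ x y p, g x y p = g y x p := by
    intro x y p
    simp only [hg]
    rw [abs_sub_comm]
  have hhalf : ∀ x y p, x ≠ y → dist p.1 x < p.2 → g x y p ≤ A * φ x (dist x y) := by
    rintro x y ⟨z, R, hR⟩ hxy hzx
    simp only [hg] at *
    have hd : 0 < dist x y := dist_pos.mpr hxy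
    have hφ := h.pos z R hR
    have hlip : |min 1 (dist z x / R) - min 1 (dist z y / R)| ≤ dist x y / R := by
      refine (abs_min_sub_min_le_max 1 (dist z x / R) 1 (dist z y / R)).trans ?_
      rw [sub_self, abs_zero, max_eq_right (abs_nonneg _), ← sub_div, abs_div, abs_of_pos hR]
      gcongr
      rw [dist_comm z x, dist_comm z y]
      exact abs_dist_sub_le x y z
    have hone : |min 1 (dist z x / R) - min 1 (dist z y / R)| ≤ 1 := by
      have a1 : 0 ≤ min 1 (dist z x / R) := le_min zero_le_one (by positivity)
      have a2 : 0 ≤ min 1 (dist z y / R) := le_min zero_le_one (by positivity)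
      have a3 := min_le_left 1 (dist z x / R)
      have a4 := min_le_left 1 (dist z y / R)
      rw [abs_le]; constructor <;> linarith
    rcases le_total (dist x y) R with hc | hc
    · have h1 := h.comp z x (dist x y) R hd hc hzx.le
      calc φ z R * |min 1 (dist z x / R) - min 1 (dist z y / R)|
          ≤ φ z R * (dist x y / R) := by gcongr
        _ ≤ (A * (R / dist x y) * φ x (dist x y)) * (dist x y / R) := by gcongr
        _ = A * φ x (dist x y) := by field_simp
    · have h1 := h.mono z R (dist x y) hR hc
      have h2 := h.comp z x (dist x y) (dist x y) hd le_rfl (by linarith)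
      rw [div_self hd.ne', mul_one] at h2
      calc φ z R * |min 1 (dist z x / R) - min 1 (dist z y / R)|
          ≤ φ z R * 1 := by gcongr
        _ ≤ _ := by linarith
  have hbound : ∀ x y p, x ≠ y → g x y p ≤ A ^ 2 * φ x (dist x y) := by
    intro x y p hxy
    have hd : 0 < dist x y := dist_pos.mpr hxy
    have hφ := h.pos x _ hd
    by_cases h1 : dist p.1 x < p.2
    · refine (hhalf x y p hxy h1).trans ?_
      have : A ≤ A ^ 2 := by nlinarith
      gcongr
    · by_cases h2 : dist p.1 y < p.2
      · rw [hsymm]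
        refine (hhalf y x p hxy.symm h2).trans ?_
        rw [dist_comm y x]
        have h3 := h.comp y x (dist x y) (dist x y) hd le_rfl (by rw [dist_comm])
        rw [div_self hd.ne', mul_one] at h3
        calc A * φ y (dist x y) ≤ A * (A * φ x (dist x y)) := by gcongr
          _ = _ := by ring
      · have hp := p.2.2
        have e1 : min 1 (dist p.1 x / (p.2 : ℝ)) = 1 :=
          min_eq_left ((one_le_div hp).mpr (not_lt.mp h1))
        have e2 : min 1 (dist p.1 y / (p.2 : ℝ)) = 1 :=
          min_eq_left ((one_le_div hp).mpr (not_lt.mp h2))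
        simp only [hg]
        rw [e1, e2]
        simp only [sub_self, abs_zero, mul_zero]
        positivity
  have hself : ∀ x p, g x x p = 0 := by
    intro x p; simp [hg]
  have hbdd : ∀ x y, BddAbove (Set.range (g x y)) := by
    intro x y
    by_cases hxy : x = y
    · subst hxy
      refine ⟨0, ?_⟩
      rintro _ ⟨p, rfl⟩
      exact (hself x p).le
    · refine ⟨A ^ 2 * φ x (dist x y), ?_⟩
      rintro _ ⟨p, rfl⟩
      exact hbound x y p hxy
  refine ⟨fun x y => ⨆ p, g x y p, ?_, ?_, ?_, ?_⟩
  · intro x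
    simp only [hself]
    exact ciSup_const
  · intro x y
    simp only [hsymm x y]
  · intro x y z
    apply ciSup_le
    intro p
    refine le_trans ?_ (add_le_add (le_ciSup (hbdd x y) p) (le_ciSup (hbdd y z) p))
    simp only [hg]
    rw [← mul_add]
    have := (h.pos p.1 p.2 p.2.2).le
    gcongr
    exact abs_sub_le _ _ _
  · intro x y hxy
    have hd : 0 < dist x y := dist_pos.mpr hxy
    refine ⟨?_, ciSup_le fun p => hbound x y p hxy⟩
    refine le_trans (le_of_eq ?_) (le_ciSup (hbdd x y) (x, ⟨dist x y, hd⟩))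
    simp only [hg]
    rw [dist_self, zero_div, div_self hd.ne']
    simp

open MeasureTheory in
lemma good_metric {Z : Type*} [MetricSpace Z] [Nonempty Z] [MeasurableSpace Z] {β : ℝ}
    {μ : Measure Z} {κ : ℝ → ℝ} {C C0 : ℝ} (h : HomM Z β μ κ C C0) (hβ : 0 < β) :
    ∃ (ρ : Z → Z → ℝ) (A1 : ℝ), 1 ≤ A1 ∧ (∀ x, ρ x x = 0) ∧ (∀ x y, ρ x y = ρ y x) ∧
      (∀ x y z, ρ x z ≤ ρ x y + ρ y z) ∧
      (∀ x y, x ≠ y → gaugeF μ κ β x (dist x y) ≤ A1 * ρ x y ∧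
        ρ x y ≤ A1 * gaugeF μ κ β x (dist x y)) ∧
      ∀ x y, (∃ u v, ρ x y < ρ u v) → κ (4 * dist x y) = 4 * dist x y := by
  have hG := h.gauge hβ
  set A := C ^ (1 / β) with hA
  have hA1 : 1 ≤ A := hG.A_ge
  have hA2 : 1 ≤ A ^ 2 := one_le_pow₀ hA1
  obtain ⟨ρ, h1, h2, h3, h4⟩ := gauge_metric hG
  have hρ0 : ∀ x y, 0 ≤ ρ x y := by
    intro x y
    have a1 := h3 x y x
    rw [h1, h2 y x] at a1
    linarith
  rcases h.alt with hκ | ⟨Rs, m0, m1, hRs, hm0, hm1, hκ, hm⟩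
  · refine ⟨ρ, A ^ 2, hA2, h1, h2, h3, ?_, fun x y _ => hκ _⟩
    intro x y hxy
    refine ⟨(h4 x y hxy).1.trans ?_, (h4 x y hxy).2⟩
    exact le_mul_of_one_le_left (hρ0 x y) hA2
  · set φ := gaugeF μ κ β with hφ
    have hκRs : κ Rs = Rs := by rw [hκ, min_self]
    have hlow : ∀ x, m0 ^ (1 / β) ≤ φ x Rs := by
      intro x
      apply Real.rpow_le_rpow hm0.le _ (by positivity)
      unfold massF
      rw [← ENNReal.ofReal_le_iff_le_toReal (h.fin x Rs hRs), hκRs]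
      exact (hm x).1
    have hup : ∀ x R, 0 < R → φ x R ≤ m1 ^ (1 / β) := by
      intro x R hR
      apply Real.rpow_le_rpow (h.mass_pos x R hR).le _ (by positivity)
      unfold massF
      apply ENNReal.toReal_le_of_le_ofReal hm1.le
      refine le_trans (measure_mono (Metric.ball_subset_ball ?_)) (hm x).2
      rw [hκ]; exact min_le_right _ _
    set M0 := m0 ^ (1 / β) with hM0
    set M1 := m1 ^ (1 / β) with hM1
    have hM0p : 0 < M0 := by positivity
    have hM1p : 0 < M1 := by positivity
    set τ := M0 / (4 * A) with hτ
    have hτ0 : 0 < τ := by positivity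
    have hbig : ∀ x d, Rs < 4 * d → τ ≤ φ x d := by
      intro x d hd
      have a1 := hG.comp x x (Rs / 4) Rs (by linarith) (by linarith) (by simp [hRs.le])
      have a2 := hG.mono x (Rs / 4) d (by linarith) (by linarith)
      have e : Rs / (Rs / 4) = 4 := by field_simp
      rw [e] at a1
      rw [hτ, div_le_iff₀ (by positivity)]
      have a3 := hlow x
      nlinarith
    refine ⟨fun x y => min (ρ x y) τ, max (A ^ 2) (M1 / τ), hA2.trans (le_max_left _ _),
      ?_, ?_, ?_, ?_, ?_⟩
    · intro x; simp only [h1]; exact min_eq_left hτ0.le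
    · intro x y; simp only [h2 x y]
    · intro x y z
      have a1 := h3 x y z
      have a2 := hρ0 x y
      have a3 := hρ0 y z
      simp only
      rcases le_total (ρ x y) τ with b1 | b1
      · rw [min_eq_left b1]
        rcases le_total (ρ y z) τ with b2 | b2
        · rw [min_eq_left b2]
          exact (min_le_left _ _).trans a1
        · rw [min_eq_right b2]
          exact (min_le_right _ _).trans (by linarith)
      · rw [min_eq_right b1]
        have : 0 ≤ min (ρ y z) τ := le_min a3 hτ0.le
        exact (min_le_right _ _).trans (by linarith)
    · intro x y hxy
      have hd : 0 < dist x y := dist_pos.mpr hxy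
      have hφ0 := hG.pos x _ hd
      obtain ⟨a1, a2⟩ := h4 x y hxy
      constructor
      · simp only
        rcases le_total (ρ x y) τ with b1 | b1
        · rw [min_eq_left b1]
          refine a1.trans ?_
          exact le_mul_of_one_le_left (hρ0 x y) (hA2.trans (le_max_left _ _))
        · rw [min_eq_right b1]
          calc φ x (dist x y) ≤ M1 := hup x _ hd
            _ = M1 / τ * τ := by field_simp
            _ ≤ _ := by gcongr; exact le_max_right _ _
      · refine (min_le_left _ _).trans (a2.trans ?_)
        gcongr
        exact le_max_left _ _
    · rintro x y ⟨u, v, huv⟩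
      have a1 : min (ρ x y) τ < τ := lt_of_lt_of_le huv (min_le_right _ _)
      have a2 : ρ x y < τ := by
        rcases min_lt_iff.mp a1 with b | b
        · exact b
        · exact absurd b (lt_irrefl _)
      rw [hκ]
      apply min_eq_left
      by_contra hcon
      rw [not_le] at hcon
      have hxy : x ≠ y := by
        rintro rfl
        rw [dist_self] at hcon; linarith
      have a3 := (h4 x y hxy).1
      have a4 := hbig x (dist x y) hcon
      linarith

/-- A bare copy of a type. -/
structure CopyT (Z : Type u) : Type u where
  val : Z

lemma exists_copy {Z : Type u} (ρ : Z → Z → ℝ) (h0 : ∀ x, ρ x x = 0) (h1 : ∀ x y, ρ x y = ρ y x)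
    (h2 : ∀ x y z, ρ x z ≤ ρ x y + ρ y z) (h3 : ∀ x y, x ≠ y → 0 < ρ x y) :
    ∃ (W : Type u) (_ : MetricSpace W) (e : Z ≃ W), ∀ x y, dist (e x) (e y) = ρ x y := by
  let m : MetricSpace (CopyT Z) :=
    { dist := fun a b => ρ a.val b.val
      dist_self := fun a => h0 a.val
      dist_comm := fun a b => h1 a.val b.val
      dist_triangle := fun a b c => h2 a.val b.val c.val
      eq_of_dist_eq_zero := by
        rintro ⟨a⟩ ⟨b⟩ hab
        by_contra hne
        have : a ≠ b := fun h => hne (by rw [h])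
        have h4 := h3 a b this
        change ρ a b = 0 at hab
        linarith }
  exact ⟨CopyT Z, m, ⟨CopyT.mk, CopyT.val, fun _ => rfl, fun _ => rfl⟩, fun x y => rfl⟩

lemma exists_eta (B a : ℝ≥0) (hB : 0 < B) (ha : 0 < a) :
    ∃ η : ℝ≥0 ≃ₜ ℝ≥0, ∀ t, η t = B * (t + t ^ (a : ℝ)) := by
  have ha' : (0 : ℝ) < a := ha
  have hmono : StrictMono (fun t : ℝ≥0 => B * (t + t ^ (a : ℝ))) := by
    intro s t hst
    have h1 : s ^ (a : ℝ) ≤ t ^ (a : ℝ) := NNReal.rpow_le_rpow hst.le ha'.le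
    exact mul_lt_mul_of_pos_left (add_lt_add_of_lt_of_le hst h1) hB
  have hcont : Continuous (fun t : ℝ≥0 => B * (t + t ^ (a : ℝ))) := by
    have : Continuous (fun t : ℝ≥0 => t ^ (a : ℝ)) := NNReal.continuous_rpow_const ha'.le
    fun_prop
  have hsurj : Function.Surjective (fun t : ℝ≥0 => B * (t + t ^ (a : ℝ))) := by
    apply hcont.surjective
    · apply Filter.tendsto_atTop_mono (f := fun t : ℝ≥0 => B * t)
      · intro t
        gcongr
        exact le_self_add
      · exact Filter.Tendsto.const_mul_atTop hB Filter.tendsto_id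
    · rw [Filter.OrderBot.atBot_eq]
      rw [Filter.tendsto_pure_left]
      intro s hs
      have : B * ((⊥ : ℝ≥0) + ⊥ ^ (a : ℝ)) = ⊥ := by
        simp [NNReal.zero_rpow ha'.ne']
      rw [this]
      exact hs
  exact ⟨(hmono.orderIsoOfSurjective _ hsurj).toHomeomorph, fun t => rfl⟩

lemma qs_copy {Z W : Type*} [MetricSpace Z] [MetricSpace W] (e : Z ≃ W) {φ : Z → ℝ → ℝ}
    {A A1 A2 a : ℝ} (hG : Gauge Z φ A) (hA1 : 1 ≤ A1) (hA2 : 1 ≤ A2) (ha : 0 < a)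
    (hrev : RevD Z φ A2 a)
    (hcomp : ∀ x y, x ≠ y → φ x (dist x y) ≤ A1 * dist (e x) (e y) ∧
        dist (e x) (e y) ≤ A1 * φ x (dist x y)) : IsQuasisymmetric (e : Z → W) := by
  have hA := hG.A_ge
  set B := A1 * (A * A2) * A1 with hB
  have hB0 : 0 < B := by positivity
  obtain ⟨η, hη⟩ := exists_eta ⟨B, hB0.le⟩ ⟨a, ha.le⟩ (by exact_mod_cast hB0)
    (by exact_mod_cast ha)
  refine ⟨η, ?_⟩
  intro x y z t hxyz
  have hd : dist x y ≤ t * dist x z := by exact_mod_cast hxyz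
  rw [hη]
  have goal : dist (e x) (e y) ≤ B * ((t : ℝ) + (t : ℝ) ^ a) * dist (e x) (e z) := by
    have ht0 : (0 : ℝ) ≤ t := t.2
    by_cases hxy : x = y
    · subst hxy; rw [dist_self]; positivity
    have hdxy : 0 < dist x y := dist_pos.mpr hxy
    have hxz : x ≠ z := by
      rintro rfl
      rw [dist_self, mul_zero] at hd
      linarith
    have hdxz : 0 < dist x z := dist_pos.mpr hxz
    have h1 := (hcomp x y hxy).2
    have h2 := (hcomp x z hxz).1
    have hφz := hG.pos x _ hdxz
    have hrt : dist x y / dist x z ≤ t := by rwa [div_le_iff₀ hdxz]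
    have hta : 0 ≤ (t : ℝ) ^ a := by positivity
    have h3 : φ x (dist x y) ≤ A * A2 * ((t : ℝ) + (t : ℝ) ^ a) * φ x (dist x z) := by
      rcases le_total (dist x y) (dist x z) with hc | hc
      · have h4 := hrev x z _ _ hdxy hc le_rfl
        refine h4.trans ?_
        have h5 : (dist x y / dist x z) ^ a ≤ (t : ℝ) ^ a :=
          Real.rpow_le_rpow (by positivity) hrt ha.le
        have h6 : A2 ≤ A * A2 := le_mul_of_one_le_left (by linarith) hA
        have h7 : (dist x y / dist x z) ^ a ≤ (t : ℝ) + (t : ℝ) ^ a := by linarith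
        gcongr
      · have h4 := hG.comp x x _ _ hdxz hc (by simp)
        refine h4.trans ?_
        have h6 : A ≤ A * A2 := le_mul_of_one_le_right (by linarith) hA2
        have h7 : dist x y / dist x z ≤ (t : ℝ) + (t : ℝ) ^ a := by linarith
        gcongr
    calc dist (e x) (e y) ≤ A1 * φ x (dist x y) := h1
      _ ≤ A1 * (A * A2 * ((t : ℝ) + (t : ℝ) ^ a) * φ x (dist x z)) := by gcongr
      _ ≤ A1 * (A * A2 * ((t : ℝ) + (t : ℝ) ^ a) * (A1 * dist (e x) (e z))) := by gcongr
      _ = _ := by rw [hB]; ring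
  rw [← NNReal.coe_le_coe]
  push_cast
  exact goal

open MeasureTheory in
lemma regular_copy {Z W : Type u} [MetricSpace Z] [CompleteSpace Z] [Nontrivial Z]
    [MeasurableSpace Z] [BorelSpace Z] [MetricSpace W] (e : Z ≃ W) {β : ℝ}
    {μ : Measure Z} {κ : ℝ → ℝ} {C C0 A1 A2 a : ℝ} (h : HomM Z β μ κ C C0) (hβ : 0 < β)
    (hA1 : 1 ≤ A1) (hA2 : 1 ≤ A2) (ha : 0 < a) (hrev : RevD Z (gaugeF μ κ β) A2 a)
    (hcomp : ∀ x y, x ≠ y → gaugeF μ κ β x (dist x y) ≤ A1 * dist (e x) (e y) ∧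
        dist (e x) (e y) ≤ A1 * gaugeF μ κ β x (dist x y))
    (hk : ∀ x y, (∃ u v, dist (e x) (e y) < dist (e u) (e v)) →
      κ (4 * dist x y) = 4 * dist x y)
    (hqs : WQS (e : Z → W)) : AhlforsRegular W β := by
  have hG := h.gauge hβ
  set A := C ^ (1 / β) with hAdef
  have hA : 1 ≤ A := hG.A_ge
  have hA10 : 0 < A1 := by linarith
  have hA20 : 0 < A2 := by linarith
  have hA0 : 0 < A := by linarith
  set φ := gaugeF μ κ β with hφ
  have hcontl : Continuous (e : Z → W) := hqs.continuous
  haveI : CompleteSpace W := hqs.complete e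
  letI : MeasurableSpace W := borel W
  haveI : BorelSpace W := ⟨rfl⟩
  refine ⟨inferInstance, inferInstance, inferInstance, ?_⟩
  have hmeas : ∀ w r, (μ.map e) (Metric.ball w r) = μ (e ⁻¹' (Metric.ball w r)) := fun w r =>
    Measure.map_apply hcontl.measurable Metric.isOpen_ball.measurableSet
  -- smallness of φ
  have hsmall : ∀ x z : Z, x ≠ z → ∀ ε : ℝ, 0 < ε →
      ∃ n : ℕ, φ x (dist x z / 2 ^ n) < ε := by
    intro x z hxz ε hε
    have hd := dist_pos.mpr hxz
    have hφz := hG.pos x _ hd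
    have h1 : ((1 / 2 : ℝ) ^ a) < 1 := Real.rpow_lt_one (by norm_num) (by norm_num) ha
    have h2 : 0 < ((1 / 2 : ℝ) ^ a) := by positivity
    obtain ⟨n, hn⟩ := exists_pow_lt_of_lt_one
      (show 0 < ε / (A2 * φ x (dist x z)) by positivity) h1
    refine ⟨n, ?_⟩
    have h3 := hrev x z (dist x z / 2 ^ n) (dist x z) (by positivity)
      (div_le_self hd.le (one_le_pow₀ (by norm_num))) le_rfl
    have e1 : dist x z / 2 ^ n / dist x z = (1 / 2) ^ n := by
      rw [one_div, inv_pow]; field_simp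
    have e2 : ((1 / 2 : ℝ) ^ n) ^ a = ((1 / 2 : ℝ) ^ a) ^ n := by
      rw [← Real.rpow_natCast, ← Real.rpow_mul (by norm_num), mul_comm,
        Real.rpow_mul (by norm_num), Real.rpow_natCast]
    rw [e1, e2] at h3
    rw [lt_div_iff₀ (by positivity)] at hn
    linarith
  -- points at distance
  have hfar : ∀ r : ℝ, 0 < r → ENNReal.ofReal r ≤ EMetric.diam (Set.univ : Set W) →
      ∀ s < r, ∃ u v : Z, s < dist (e u) (e v) := by
    intro r hr hdiam s hs
    by_contra hcon
    push Not at hcon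
    have h1 : EMetric.diam (Set.univ : Set W) ≤ ENNReal.ofReal s := by
      apply Metric.ediam_le
      intro u _ v _
      rw [edist_dist]
      apply ENNReal.ofReal_le_ofReal
      have := hcon (e.symm u) (e.symm v)
      simpa using this
    have h2 := hdiam.trans h1
    rw [ENNReal.ofReal_le_ofReal_iff'] at h2
    rcases h2 with h2 | h2 <;> linarith
  set K1 : ℝ := 4 * A * A1 with hK1
  have hK10 : 0 < K1 := by positivity
  have hlow : ∀ x : Z, ∀ r : ℝ, 0 < r → ENNReal.ofReal r ≤ EMetric.diam (Set.univ : Set W) →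
      ENNReal.ofReal ((K1⁻¹ * r) ^ β) ≤ μ (e ⁻¹' (Metric.ball (e x) r)) := by
    intro x r hr hdiam
    obtain ⟨R, hR, hR1, hR2⟩ : ∃ R : ℝ, 0 < R ∧ A1 * φ x R < r ∧ K1⁻¹ * r ≤ φ x R := by
      obtain ⟨u, v, huv⟩ := hfar r hr hdiam (r / 2) (by linarith)
      obtain ⟨z, hz⟩ : ∃ z, r / 4 < dist (e x) (e z) := by
        by_contra hcon
        push Not at hcon
        have a1 := hcon u
        have a2 := hcon v
        have a3 := dist_triangle_left (e u) (e v) (e x)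
        linarith
      have hxz : x ≠ z := by
        rintro rfl
        rw [dist_self] at hz; linarith
      have hd := dist_pos.mpr hxz
      have hz1 := (hcomp x z hxz).2
      have hex := hsmall x z hxz (r / A1) (by positivity)
      classical
      have hs1 := Nat.find_spec hex
      refine ⟨dist x z / 2 ^ (Nat.find hex), by positivity, ?_, ?_⟩
      · rw [lt_div_iff₀ hA10] at hs1; linarith
      · rw [hK1, inv_mul_le_iff₀ (by positivity)]
        rcases Nat.eq_zero_or_pos (Nat.find hex) with hn | hn
        · rw [hn, pow_zero, div_one]
          have hp := hG.pos x _ hd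
          have : A1 * φ x (dist x z) ≤ A * (A1 * φ x (dist x z)) :=
            le_mul_of_one_le_left (by positivity) hA
          nlinarith
        · obtain ⟨q, hq⟩ := Nat.exists_eq_succ_of_ne_zero hn.ne'
          have hmin := Nat.find_min hex (m := q) (by omega)
          rw [not_lt, div_le_iff₀ hA10] at hmin
          rw [hq, Nat.succ_eq_add_one]
          have hp := hG.pos x (dist x z / 2 ^ (q + 1)) (by positivity)
          have e3 : dist x z / 2 ^ q / (dist x z / 2 ^ (q + 1)) = 2 := by
            rw [pow_succ]; field_simp
          have h4 := hG.comp x x (dist x z / 2 ^ (q + 1)) (dist x z / 2 ^ q) (by positivity)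
            (by rw [pow_succ]; gcongr; linarith [show (0 : ℝ) < 2 ^ q by positivity])
            (by rw [dist_self]; positivity)
          rw [e3] at h4
          calc r ≤ φ x (dist x z / 2 ^ q) * A1 := hmin
            _ ≤ (A * 2 * φ x (dist x z / 2 ^ (q + 1))) * A1 := by gcongr
            _ ≤ _ := by
              have : 0 ≤ A * A1 * φ x (dist x z / 2 ^ (q + 1)) := by positivity
              nlinarith
    calc ENNReal.ofReal ((K1⁻¹ * r) ^ β) ≤ ENNReal.ofReal (φ x R ^ β) := by
          apply ENNReal.ofReal_le_ofReal
          exact Real.rpow_le_rpow (by positivity) hR2 hβ.le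
      _ = μ (Metric.ball x (κ R)) := (h.gauge_pow hβ x R hR).symm
      _ ≤ _ := by
          apply measure_mono
          intro y hy
          rw [Metric.mem_ball] at hy
          rw [Set.mem_preimage, Metric.mem_ball, dist_comm]
          by_cases hxy : x = y
          · subst hxy; rwa [dist_self]
          · have hd := dist_pos.mpr hxy
            have h1 := (hcomp x y hxy).2
            have h2 := hG.mono x (dist x y) R hd (by
              rw [dist_comm]; exact hy.le.trans (h.le R))
            nlinarith
  have hup : ∀ x : Z, ∀ r : ℝ, 0 < r → ENNReal.ofReal r ≤ EMetric.diam (Set.univ : Set W) →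
      μ (e ⁻¹' (Metric.ball (e x) r)) ≤ ENNReal.ofReal ((K1 * r) ^ β) := by
    intro x r hr hdiam
    set S : Set ℝ := (fun y => dist x y) '' (e ⁻¹' (Metric.ball (e x) r)) with hS
    have hxS : (0 : ℝ) ∈ S := ⟨x, by simp [hr], by simp⟩
    have hbd : BddAbove S := by
      obtain ⟨z, hz⟩ := exists_ne x
      have hd := dist_pos.mpr hz.symm
      have hφz := hG.pos x _ hd
      set T := A2 * (A1 * r) / φ x (dist x z) with hT
      have hT0 : 0 < T := by positivity
      refine ⟨max (dist x z) (dist x z * T ^ (1 / a)), ?_⟩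
      rintro _ ⟨y, hy, rfl⟩
      rw [Set.mem_preimage, Metric.mem_ball, dist_comm] at hy
      simp only
      rcases le_total (dist x y) (dist x z) with hc | hc
      · exact hc.trans (le_max_left _ _)
      · refine le_trans ?_ (le_max_right _ _)
        have hxy : x ≠ y := by
          rintro rfl
          rw [dist_self] at hc; linarith
        have hdy := dist_pos.mpr hxy
        have h1 := hrev x y (dist x z) (dist x y) hd hc le_rfl
        have h2 := (hcomp x y hxy).1
        have hφy := hG.pos x _ hdy
        have hra : 0 < (dist x z / dist x y) ^ a := by positivity
        have h3 : (dist x y / dist x z) ^ a ≤ T := by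
          have e1 : (dist x y / dist x z) ^ a = ((dist x z / dist x y) ^ a)⁻¹ := by
            rw [← Real.inv_rpow (by positivity), inv_div]
          rw [e1, hT, inv_le_iff_one_le_mul₀ hra, div_mul_eq_mul_div, one_le_div hφz]
          have h4 : φ x (dist x y) ≤ A1 * r := h2.trans (by gcongr)
          calc φ x (dist x z) ≤ A2 * (dist x z / dist x y) ^ a * φ x (dist x y) := h1
            _ ≤ A2 * (dist x z / dist x y) ^ a * (A1 * r) := by gcongr
            _ = _ := by ring
        have h5 : dist x y / dist x z ≤ T ^ (1 / a) := by
          have := Real.rpow_le_rpow (by positivity) h3 (show 0 ≤ 1 / a by positivity)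
          rwa [← Real.rpow_mul (by positivity), mul_one_div_cancel ha.ne', Real.rpow_one] at this
        rw [div_le_iff₀ hd] at h5
        linarith
    have hs0 : 0 ≤ sSup S := le_csSup hbd hxS
    rcases hs0.eq_or_lt with hs | hs
    · -- the ball is a point
      have hsub : ∀ ε : ℝ, 0 < ε → μ (e ⁻¹' (Metric.ball (e x) r)) ≤ ENNReal.ofReal (ε ^ β) := by
        intro ε hε
        obtain ⟨z, hz⟩ := exists_ne x
        have hd := dist_pos.mpr hz.symm
        obtain ⟨n, hn⟩ := hsmall x z hz.symm ε hε
        have hRn : 0 < dist x z / 2 ^ n := by positivity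
        calc μ (e ⁻¹' (Metric.ball (e x) r)) ≤ μ (Metric.ball x (κ (dist x z / 2 ^ n))) := by
              apply measure_mono
              intro y hy
              have h1 : dist x y ≤ 0 := by
                rw [hs]; exact le_csSup hbd ⟨y, hy, rfl⟩
              rw [Metric.mem_ball, dist_comm]
              exact lt_of_le_of_lt h1 (h.pos _ hRn)
          _ = ENNReal.ofReal (φ x (dist x z / 2 ^ n) ^ β) := h.gauge_pow hβ x _ hRn
          _ ≤ _ := by
              apply ENNReal.ofReal_le_ofReal
              exact Real.rpow_le_rpow (hG.pos x _ hRn).le hn.le hβ.le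
      exact hsub (K1 * r) (by positivity)
    · obtain ⟨_, ⟨y, hy, rfl⟩, hlt⟩ := exists_lt_of_lt_csSup ⟨0, hxS⟩ (half_lt_self hs)
      simp only at hlt
      have hyr : dist (e x) (e y) < r := by
        rw [Set.mem_preimage, Metric.mem_ball, dist_comm] at hy
        exact hy
      have hdy : 0 < dist x y := by linarith
      have hxy : x ≠ y := dist_pos.mp hdy
      have hκ := hk x y (hfar r hr hdiam _ hyr)
      calc μ (e ⁻¹' (Metric.ball (e x) r)) ≤ μ (Metric.ball x (κ (4 * dist x y))) := by
            apply measure_mono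
            intro w hw
            rw [hκ, Metric.mem_ball, dist_comm]
            have : dist x w ≤ sSup S := le_csSup hbd ⟨w, hw, rfl⟩
            linarith
        _ = ENNReal.ofReal (φ x (4 * dist x y) ^ β) := h.gauge_pow hβ x _ (by positivity)
        _ ≤ _ := by
            apply ENNReal.ofReal_le_ofReal
            apply Real.rpow_le_rpow (hG.pos x _ (by positivity)).le _ hβ.le
            have h1 := hG.comp x x (dist x y) (4 * dist x y) hdy (by linarith)
              (by rw [dist_self]; positivity)
            have e1 : 4 * dist x y / dist x y = 4 := by field_simp
            rw [e1] at h1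
            have h2 := (hcomp x y hxy).1
            calc φ x (4 * dist x y) ≤ A * 4 * φ x (dist x y) := h1
              _ ≤ A * 4 * (A1 * r) := by
                gcongr
                exact h2.trans (by gcongr)
              _ = _ := by rw [hK1]; ring
  have hK11 : 1 ≤ K1 := by
    rw [hK1]
    have : 1 ≤ A * A1 := one_le_mul_of_one_le_of_one_le hA hA1
    linarith
  refine ⟨μ.map e, K1 ^ β, Real.one_le_rpow hK11 hβ.le, ?_⟩
  intro w r hr hdiam
  obtain ⟨x, rfl⟩ := e.surjective w
  rw [hmeas]
  constructor
  · have h1 := hlow x r hr hdiam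
    rwa [Real.mul_rpow (by positivity) hr.le, Real.inv_rpow hK10.le] at h1
  · have h1 := hup x r hr hdiam
    rwa [Real.mul_rpow hK10.le hr.le] at h1


lemma main_step {Z : Type u} [MetricSpace Z] [CompleteSpace Z] [Nontrivial Z] (hUP : UP Z)
    {L β : ℝ} {N : ℕ} (hL : 100 ≤ L) (hβ : 0 < β) (hNL : 2 * (N : ℝ) ≤ L ^ β)
    (hcov : Cov Z L N) :
    ∃ (W : Type u) (_ : MetricSpace W) (e : Z ≃ₜ W),
      AhlforsRegular W β ∧ IsQuasisymmetric (e : Z → W) := by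
  letI : MeasurableSpace Z := borel Z
  haveI : BorelSpace Z := ⟨rfl⟩
  obtain ⟨μ, κ, C, C0, h⟩ := exists_hom hL hβ hNL hcov
  obtain ⟨ρ, A1, hA1, h0, h1, h2, h3, h4⟩ := good_metric h hβ
  have hG := h.gauge hβ
  obtain ⟨A2, a, hA2, ha, hrev⟩ := h.revD hβ hUP
  have hpos : ∀ x y, x ≠ y → 0 < ρ x y := by
    intro x y hxy
    have a1 := hG.pos x _ (dist_pos.mpr hxy)
    have a2 := (h3 x y hxy).1
    by_contra hc
    push Not at hc
    nlinarith
  obtain ⟨W, _, e, he⟩ := exists_copy ρ h0 h1 h2 hpos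
  have hcomp : ∀ x y, x ≠ y → gaugeF μ κ β x (dist x y) ≤ A1 * dist (e x) (e y) ∧
      dist (e x) (e y) ≤ A1 * gaugeF μ κ β x (dist x y) := by
    intro x y hxy
    rw [he]
    exact h3 x y hxy
  have hqs := qs_copy e hG hA1 hA2 ha hrev hcomp
  have hw := hqs.wqs
  haveI : Nontrivial W := e.symm.nontrivial
  refine ⟨W, inferInstance, ⟨e, hw.continuous, (WQS.symm e hw).continuous⟩, ?_, hqs⟩
  refine regular_copy e h hβ hA1 hA2 ha hrev hcomp ?_ hw
  intro x y hxy
  simp only [he] at hxy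
  exact h4 x y hxy

lemma confdim_le {Z : Type u} [MetricSpace Z] {Q : ℝ} (h : Q ∈ confdimSet Z) :
    confdim Z ≤ Q :=
  csInf_le ⟨0, fun _ hq => hq.1⟩ h

lemma zero_mem_confdimSet (Z : Type u) [MetricSpace Z] [Subsingleton Z] : 0 ∈ confdimSet Z := by
  letI : MeasurableSpace Z := borel Z
  haveI : BorelSpace Z := ⟨rfl⟩
  refine ⟨le_rfl, Z, inferInstance, Homeomorph.refl Z, ⟨inferInstance, inferInstance,
    inferInstance, 0, 1, le_rfl, ?_⟩, Homeomorph.refl _, fun x y z t h => h⟩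
  intro w r hr hd
  change ENNReal.ofReal r ≤ Metric.ediam (Set.univ : Set Z) at hd
  rw [Metric.ediam_subsingleton Set.subsingleton_univ] at hd
  simp at hd
  linarith


/-- If `X` is a nonempty metric space, `Y ⊆ X` is a nonempty porous subset (with the induced
metric), the conformal dimensions of `Y` and `X` are equal, finite (i.e. the defining sets of
exponents are nonempty) and positive, then the conformal dimension of `X` is not attained:
there is no Ahlfors `Q`-regular space `W` with `Q = confdim X` quasisymmetric to `X`. -/
theorem confdim_not_attained_of_porous {X : Type u} [MetricSpace X] [Nonempty X]
    (Y : Set X) (hYne : Y.Nonempty) (hYpor : Porous Y)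
    (hfinX : (confdimSet X).Nonempty) (hfinY : (confdimSet (↥Y)).Nonempty)
    (heq : confdim (↥Y) = confdim X) (hpos : 0 < confdim X) :
    ¬ ∃ (W : Type u) (_ : MetricSpace W) (f : X ≃ₜ W),
        AhlforsRegular W (confdim X) ∧ IsQuasisymmetric (f : X → W) := by
  rintro ⟨W, _, f, hW, hf⟩
  have hnt : Nontrivial ↥Y := by
    by_contra hc
    haveI := not_nontrivial_iff_subsingleton.mp hc
    have := confdim_le (zero_mem_confdimSet ↥Y)
    linarith
  obtain ⟨S, hS⟩ := hfinY
  have hS0 : 0 < S := by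
    have := confdim_le hS
    linarith
  obtain ⟨_, V, _, g, hV, hg⟩ := hS
  let i : ↥Y ≃ₜ ↥(f.toEquiv '' Y) := f.image Y
  obtain ⟨η, hη⟩ := hf
  have hiη : IsQuasisymmetricWith η (i : ↥Y → ↥(f.toEquiv '' Y)) :=
    fun x y z t h => hη x y z t h
  have hi : WQS (i : ↥Y → ↥(f.toEquiv '' Y)) := IsQuasisymmetric.wqs ⟨η, hiη⟩
  have hVZ : WQS ((g.toEquiv.symm.trans i.toEquiv : V ≃ ↥(f.toEquiv '' Y)) :
      V → ↥(f.toEquiv '' Y)) :=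
    WQS.comp (f := (g.toEquiv.symm : V → ↥Y)) (g := (i : ↥Y → ↥(f.toEquiv '' Y))) hi
      (WQS.symm g.toEquiv hg.wqs)
  haveI : Nontrivial V := g.toEquiv.symm.nontrivial
  haveI : Nontrivial ↥(f.toEquiv '' Y) := i.toEquiv.symm.nontrivial
  have hUP : UP ↥(f.toEquiv '' Y) := UP_transfer _ hVZ hS0 hV
  haveI : CompleteSpace V := hV.1
  haveI : CompleteSpace ↥(f.toEquiv '' Y) := WQS.complete _ hVZ
  obtain ⟨c, hc, hc1, hP⟩ := porous_transfer Y hYpor f.toEquiv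
    (IsQuasisymmetric.wqs ⟨η, hη⟩) hUP
  obtain ⟨β, L, N, hβ, hβQ, hL, hNL, hcov⟩ := exists_cov hpos hW _ hc hc1 hP
  obtain ⟨W', _, e, hW', η', hη'⟩ := main_step hUP hL hβ hNL hcov
  have hmem : β ∈ confdimSet ↥Y :=
    ⟨hβ.le, W', inferInstance, i.trans e, hW', η.trans η',
      fun x y z t h => hη' _ _ _ _ (hiη x y z t h)⟩
  have := confdim_le hmem
  linarith
end
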